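/- arXiv:1112.5677 — 2 statements merged into one kernel-verified Lean document; each statement's English description precedes it below -/
import Mathlib

section
/- Let 1 < p < 2. There is a constant c_p > 0 with the following property: for every finite family Δ_ν ⊂ 𝕋, ν = 1,…,N, of pairwise-disjoint intervals, and every family of functions f_ν ∈ A_p(𝕋) with supp f_ν ⊆ Δ_ν for each ν, one has ‖Σ_{ν=1}^N f_ν‖_{A_p(𝕋)}^p ≤ c_p · Σ_{ν=1}^N ‖f_ν‖_{A_p(𝕋)}^p. The constant c_p is independent of N and of the families {Δ_ν}, {f_ν}. -/
open MeasureTheory Real Set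
open scoped ENNReal

/-- The k-th Fourier coefficient of a (2π-periodic) function on the circle,
identified with a function on [0, 2π]. -/
noncomputable def fourierCoef (f : ℝ → ℂ) (k : ℤ) : ℂ :=
  (1 / (2 * (Real.pi : ℂ))) *
    ∫ t in (0:ℝ)..(2 * Real.pi), f t * Complex.exp (-Complex.I * (k : ℂ) * (t : ℂ))

/-- The A_p(𝕋) norm: ℓ^p norm of the sequence of Fourier coefficients
(valued in ℝ≥0∞ so that divergence gives ∞). -/
noncomputable def ApNorm (p : ℝ) (f : ℝ → ℂ) : ℝ≥0∞ :=
  (∑' k : ℤ, ((‖fourierCoef f k‖₊ : ℝ≥0∞) ^ p)) ^ (1 / p)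

namespace RdF

lemma fourierCoef_eq (f : ℝ → ℂ) (k : ℤ) :
    fourierCoef f k = fourierCoeffOn (a := 0) (b := 2 * π) (by positivity) f k := by
  rw [fourierCoeffOn_eq_integral, fourierCoef]
  have h : ∀ x : ℝ, fourier (-k) (x : AddCircle (2 * π - 0)) • f x
      = f x * Complex.exp (-Complex.I * (k : ℂ) * (x : ℂ)) := by
    intro x
    rw [fourier_coe_apply, smul_eq_mul, mul_comm]
    congr 2
    have : (π : ℂ) ≠ 0 := by exact_mod_cast Real.pi_ne_zero
    push_cast
    field_simp
    ring
  simp_rw [h]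
  rw [Complex.real_smul]
  push_cast
  simp

lemma parseval {h : ℝ → ℂ} (hh : MemLp h 2 (volume.restrict (Ioc 0 (2 * π)))) :
    HasSum (fun k => ‖fourierCoef h k‖ ^ 2) ((2 * π)⁻¹ * ∫ x in Ioc 0 (2 * π), ‖h x‖ ^ 2) := by
  have := hasSum_sq_fourierCoeffOn (a := 0) (b := 2 * π) (by positivity) hh
  rw [intervalIntegral.integral_of_le (by positivity)] at this
  simpa only [fourierCoef_eq, sub_zero, smul_eq_mul] using this

lemma ae_zero_of_coeff {T : ℝ} [hT : Fact (0 < T)] {φ : AddCircle T → ℂ}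
    (hφ : Integrable φ AddCircle.haarAddCircle) (h0 : ∀ n, fourierCoeff φ n = 0) :
    φ =ᵐ[AddCircle.haarAddCircle] 0 := by
  -- integral against continuous functions
  have h_integ : ∀ ψ : C(AddCircle T, ℂ), Integrable (fun x => ψ x * φ x) AddCircle.haarAddCircle := by
    intro ψ
    exact hφ.bdd_mul (c := ‖ψ‖) ψ.continuous.aestronglyMeasurable
      (Filter.Eventually.of_forall fun x => ψ.norm_coe_le_norm x)
  let Λ : C(AddCircle T, ℂ) →ₗ[ℂ] ℂ :=
    { toFun := fun ψ => ∫ x, ψ x * φ x ∂AddCircle.haarAddCircle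
      map_add' := by
        intro a b
        rw [← integral_add (h_integ a) (h_integ b)]
        simp [add_mul]
      map_smul' := by
        intro c a
        simp only [ContinuousMap.smul_apply, smul_eq_mul, mul_assoc, RingHom.id_apply]
        rw [integral_const_mul] }
  let Λc : C(AddCircle T, ℂ) →L[ℂ] ℂ := Λ.mkContinuous (∫ x, ‖φ x‖ ∂AddCircle.haarAddCircle) (by
    intro ψ
    calc ‖∫ x, ψ x * φ x ∂AddCircle.haarAddCircle‖
        ≤ ∫ x, ‖ψ x * φ x‖ ∂AddCircle.haarAddCircle := norm_integral_le_integral_norm _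
      _ ≤ ∫ x, ‖φ x‖ * ‖ψ‖ ∂AddCircle.haarAddCircle := by
          refine integral_mono (h_integ ψ).norm (hφ.norm.mul_const _) fun x => ?_
          simp only [norm_mul]
          rw [mul_comm]
          gcongr
          exact ψ.norm_coe_le_norm x
      _ = _ := integral_mul_const _ _)
  have hker : (⊤ : Submodule ℂ C(AddCircle T, ℂ)) ≤ LinearMap.ker Λc.toLinearMap := by
    rw [← span_fourier_closure_eq_top]
    refine Submodule.topologicalClosure_minimal _ ?_ Λc.isClosed_ker
    rw [Submodule.span_le]
    rintro _ ⟨n, rfl⟩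
    have := h0 (-n)
    simp only [fourierCoeff, neg_neg, smul_eq_mul] at this
    exact this
  have hall : ∀ ψ : C(AddCircle T, ℂ), ∫ x, ψ x * φ x ∂AddCircle.haarAddCircle = 0 := by
    intro ψ
    exact hker (Submodule.mem_top (x := ψ))
  refine ae_eq_zero_of_forall_setIntegral_isClosed_eq_zero hφ fun s hs => ?_
  have hpos : ∀ n : ℕ, (0 : ℝ) < 1 / ((n : ℝ) + 1) := fun n => by positivity
  have hlim := thickenedIndicator_tendsto_indicator_closure hpos
    tendsto_one_div_add_atTop_nhds_zero_nat s
  rw [hs.closure_eq, tendsto_pi_nhds] at hlim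
  have hcont : ∀ n : ℕ, Continuous fun x : AddCircle T =>
      (((thickenedIndicator (hpos n) s x : NNReal) : ℝ) : ℂ) := fun n => by
    have := (thickenedIndicator (hpos n) s).continuous
    fun_prop
  have hz : ∀ n : ℕ, ∫ x, (((thickenedIndicator (hpos n) s x : NNReal) : ℝ) : ℂ) * φ x
      ∂AddCircle.haarAddCircle = 0 := fun n => hall ⟨_, hcont n⟩
  have hT := tendsto_integral_of_dominated_convergence (μ := AddCircle.haarAddCircle)
    (F := fun (n : ℕ) x => (((thickenedIndicator (hpos n) s x : NNReal) : ℝ) : ℂ) * φ x)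
    (f := s.indicator φ) (fun x => ‖φ x‖)
    (fun n => (hcont n).aestronglyMeasurable.mul hφ.aestronglyMeasurable) hφ.norm
    (fun n => Filter.Eventually.of_forall fun x => by
      rw [norm_mul]
      have : ‖(((thickenedIndicator (hpos n) s x : NNReal) : ℝ) : ℂ)‖ ≤ 1 := by
        rw [Complex.norm_real, Real.norm_of_nonneg (NNReal.coe_nonneg _)]
        exact_mod_cast thickenedIndicator_le_one (hpos n) s x
      exact mul_le_of_le_one_left (norm_nonneg _) this)
    (Filter.Eventually.of_forall fun x => by
      have h1 := hlim x
      have h2 : Filter.Tendsto (fun n : ℕ => (((thickenedIndicator (hpos n) s x : NNReal) : ℝ) : ℂ) * φ x)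
          Filter.atTop (nhds ((((s.indicator (fun _ => (1 : NNReal)) x : NNReal) : ℝ) : ℂ) * φ x)) := by
        have hc : Continuous fun r : NNReal => ((r : ℝ) : ℂ) * φ x := by fun_prop
        exact (hc.tendsto _).comp h1
      convert h2 using 2
      by_cases hx : x ∈ s <;> simp [hx])
  simp only [hz] at hT
  rw [integral_indicator hs.measurableSet] at hT
  exact tendsto_nhds_unique hT tendsto_const_nhds

lemma memLp_two {f : ℝ → ℂ} (hf : IntegrableOn f (Ioc 0 (2 * π)))
    (hs : Summable fun k => ‖fourierCoef f k‖ ^ 2) :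
    MemLp f 2 (volume.restrict (Ioc 0 (2 * π))) := by
  have : Fact (0 < 2 * π) := ⟨by positivity⟩
  have hf' : MemLp f 1 (volume.restrict (Ioc 0 (0 + 2 * π))) := by
    rw [zero_add]; exact memLp_one_iff_integrable.2 hf
  have hl := hf'.memLp_liftIoc.haarAddCircle
  rw [memLp_one_iff_integrable] at hl
  have hmem : Memℓp (fun k => fourierCoef f k) 2 := by
    apply memℓp_gen
    simpa using hs
  let u : lp (fun _ : ℤ => ℂ) 2 := ⟨_, hmem⟩
  let F := (fourierBasis (T := 2 * π)).repr.symm u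
  have hF : ∀ n, fourierCoeff (F : AddCircle (2 * π) → ℂ) n = fourierCoef f n := by
    intro n
    rw [← fourierBasis_repr]
    simp [F, u]
  have hlc : ∀ n, fourierCoeff (AddCircle.liftIoc (2 * π) 0 f) n = fourierCoef f n := by
    intro n
    rw [fourierCoeff_liftIoc_eq, fourierCoef_eq]
    congr 1
    simp
  have hF2 := Lp.memLp F
  have hFi : Integrable (F : AddCircle (2 * π) → ℂ) AddCircle.haarAddCircle :=
    hF2.integrable (by norm_num)
  have hz := ae_zero_of_coeff (φ := fun x => AddCircle.liftIoc (2 * π) 0 f x + (-1 : ℂ) * F x)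
    (hl.add (hFi.const_mul _)) (fun n => by
      have := fourierCoeff.add hl (hFi.const_mul (-1 : ℂ))
      have h2 := fourierCoeff.const_mul (T := 2 * π) (F : AddCircle (2 * π) → ℂ) (-1) n
      change fourierCoeff (AddCircle.liftIoc (2 * π) 0 f + fun x => (-1 : ℂ) * F x) n = 0
      rw [congrFun this n]
      simp only [Pi.add_apply]
      rw [h2, hF, hlc]; ring)
  have hl2 : MemLp (AddCircle.liftIoc (2 * π) 0 f) 2 AddCircle.haarAddCircle := by
    refine hF2.ae_eq ?_
    filter_upwards [hz] with x hx
    simp only [Pi.zero_apply] at hx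
    linear_combination -hx
  rw [memLp_haarAddCircle_iff] at hl2
  have h3 := hl2.comp_measurePreserving (AddCircle.measurePreserving_mk (2 * π) 0)
  rw [zero_add] at h3
  refine h3.ae_eq ?_
  filter_upwards [ae_restrict_mem measurableSet_Ioc] with x hx
  exact AddCircle.liftIoc_coe_apply (by simpa using hx)

end RdF

namespace RdF

lemma two_exp_step (α β z w : ℂ) (hz : ‖z‖ = 1) (hw : ‖w‖ = 1) (k s : ℤ) :
    ‖α * z ^ k + β * w ^ k‖ ≤ 2 * ‖α * z ^ (k + s) + β * w ^ (k + s)‖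
      + ‖α * z ^ (k + 2 * s) + β * w ^ (k + 2 * s)‖ := by
  have hz0 : z ≠ 0 := by rintro rfl; simp at hz
  have hw0 : w ≠ 0 := by rintro rfl; simp at hw
  have e : (α * z ^ k + β * w ^ k) * (z ^ s * w ^ s) =
      (z ^ s + w ^ s) * (α * z ^ (k + s) + β * w ^ (k + s))
        - (α * z ^ (k + 2 * s) + β * w ^ (k + 2 * s)) := by
    rw [two_mul, ← add_assoc]
    simp only [zpow_add₀ hz0, zpow_add₀ hw0]
    ring
  have h1 : ‖(α * z ^ k + β * w ^ k) * (z ^ s * w ^ s)‖ = ‖α * z ^ k + β * w ^ k‖ := by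
    simp [norm_zpow, hz, hw]
  have h2 : ‖z ^ s + w ^ s‖ ≤ 2 := by
    refine (norm_add_le _ _).trans ?_
    simp [norm_zpow, hz, hw]; norm_num
  rw [← h1, e]
  refine (norm_sub_le _ _).trans ?_
  rw [norm_mul]
  gcongr

lemma sum_inj_le (F : ℤ → ℝ) (hF : ∀ k, 0 ≤ F k) (φ : ℕ → ℤ) (hφ : Function.Injective φ) (M : ℕ)
    (S : Finset ℤ) (h : ∀ s < M, φ s ∈ S) : ∑ s ∈ Finset.range M, F (φ s) ≤ ∑ k ∈ S, F k := by
  rw [← Finset.sum_image (f := F) (g := φ) (fun a _ b _ hab => hφ hab)]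
  refine Finset.sum_le_sum_of_subset_of_nonneg ?_ fun i _ _ => hF i
  intro x hx
  simp only [Finset.mem_image, Finset.mem_range] at hx
  obtain ⟨s, hs, rfl⟩ := hx
  exact h s hs

lemma turan (α β z w : ℂ) (hz : ‖z‖ = 1) (hw : ‖w‖ = 1) (c : ℤ) (m : ℕ) (k : ℤ)
    (hk : k ∈ Finset.Ico c (c + m)) :
    (m : ℝ) * ‖α * z ^ k + β * w ^ k‖ ≤
      12 * ∑ l ∈ Finset.Ico c (c + m), ‖α * z ^ l + β * w ^ l‖ := by
  rw [Finset.mem_Ico] at hk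
  obtain ⟨ε, hε, hmem⟩ : ∃ ε : ℤ, ε ≠ 0 ∧ ∀ s : ℕ, s < m / 4 + 1 →
      k + ε * s ∈ Finset.Ico c (c + m) ∧ k + 2 * (ε * s) ∈ Finset.Ico c (c + m) := by
    by_cases h : 2 * (k - c) < m
    · refine ⟨1, by norm_num, fun s hs => ?_⟩
      simp only [Finset.mem_Ico]
      omega
    · refine ⟨-1, by norm_num, fun s hs => ?_⟩
      simp only [Finset.mem_Ico]
      omega
  set F : ℤ → ℝ := fun l => ‖α * z ^ l + β * w ^ l‖ with hFdef
  have hF : ∀ l, 0 ≤ F l := fun l => norm_nonneg _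
  have i1 : Function.Injective fun s : ℕ => k + ε * s := by
    intro a b hab
    have : ε * (a : ℤ) = ε * b := by simpa using hab
    exact_mod_cast mul_left_cancel₀ hε this
  have i2 : Function.Injective fun s : ℕ => k + 2 * (ε * s) := by
    intro a b hab
    have : ε * (a : ℤ) = ε * b := by simpa using hab
    exact_mod_cast mul_left_cancel₀ hε this
  have s1 := sum_inj_le F hF _ i1 (m / 4 + 1) _ fun s hs => (hmem s hs).1
  have s2 := sum_inj_le F hF _ i2 (m / 4 + 1) _ fun s hs => (hmem s hs).2
  have s3 : ∑ s ∈ Finset.range (m / 4 + 1), F k ≤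
      ∑ s ∈ Finset.range (m / 4 + 1), (2 * F (k + ε * s) + F (k + 2 * (ε * s))) :=
    Finset.sum_le_sum fun s _ => two_exp_step α β z w hz hw k (ε * s)
  rw [Finset.sum_add_distrib, ← Finset.mul_sum, Finset.sum_const, Finset.card_range,
    nsmul_eq_mul] at s3
  have hm : (m : ℝ) ≤ 4 * ((m / 4 + 1 : ℕ) : ℝ) := by
    have : m ≤ 4 * (m / 4 + 1) := by omega
    exact_mod_cast this
  have := hF k
  change (m : ℝ) * F k ≤ 12 * ∑ l ∈ Finset.Ico c (c + m), F l
  nlinarith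

lemma proj (g : ℤ → ℂ) (z w : ℂ) (hz : ‖z‖ = 1) (hw : ‖w‖ = 1) (c : ℤ) (m : ℕ) :
    ∃ β : ℤ → ℂ, (∀ k ∉ Finset.Ico c (c + m), β k = 0) ∧
      ∑ k ∈ Finset.Ico c (c + m), β k * z ^ (-k) = 0 ∧
      ∑ k ∈ Finset.Ico c (c + m), β k * w ^ (-k) = 0 ∧
      ∀ k ∈ Finset.Ico c (c + m), (m : ℝ) * ‖g k - β k‖ ≤
        144 * ∑ l ∈ Finset.Ico c (c + m), ‖g l‖ := by
  set S := Finset.Ico c (c + m) with hS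
  have hcard : S.card = m := by simp [hS]
  let E := EuclideanSpace ℂ S
  let A : E := WithLp.toLp 2 fun l : S => z ^ (l : ℤ)
  let B : E := WithLp.toLp 2 fun l : S => w ^ (l : ℤ)
  let G : E := WithLp.toLp 2 fun l : S => g l
  let K : Submodule ℂ E := Submodule.span ℂ {A, B}
  let V : E := K.starProjection G
  have hV : V ∈ K := Submodule.starProjection_apply_mem K G
  obtain ⟨x, y, hxy⟩ := Submodule.mem_span_pair.1 hV
  have hVl : ∀ l : S, V l = x * z ^ (l : ℤ) + y * w ^ (l : ℤ) := by
    intro l; rw [← hxy]; rfl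
  have horth : ∀ u ∈ K, inner ℂ u (G - V) = 0 := fun u hu => by
    have := Submodule.sub_starProjection_mem_orthogonal (K := K) G
    exact (Submodule.mem_orthogonal _ _).1 this u hu
  have hconj : ∀ (z : ℂ) (hz : ‖z‖ = 1) (k : ℤ), (starRingEnd ℂ) (z ^ k) = z ^ (-k) := by
    intro z hz k
    rw [map_zpow₀, zpow_neg, ← inv_zpow, Complex.inv_eq_conj hz]
  set v : ℤ → ℂ := fun k => x * z ^ k + y * w ^ k with hv
  have key : ∀ (q : ℂ) (hq : ‖q‖ = 1), (WithLp.toLp 2 fun l : S => q ^ (l : ℤ)) ∈ K →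
      ∑ k ∈ S, (g k - v k) * q ^ (-k) = 0 := by
    intro q hq hmem
    have := horth _ hmem
    rw [PiLp.inner_apply] at this
    rw [← this, ← Finset.sum_coe_sort S]
    refine Finset.sum_congr rfl fun l _ => ?_
    simp only [RCLike.inner_apply]
    rw [hconj q hq]
    change _ = (G l - V l) * _
    rw [hVl]
  have hzA := key z hz (Submodule.subset_span (by simp [A]))
  have hwB := key w hw (Submodule.subset_span (by simp [B]))
  -- bound
  have hT : ∀ k ∈ S, (m : ℝ) * ‖v k‖ ≤ 12 * ∑ l ∈ S, ‖v l‖ := fun k hk =>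
    turan x y z w hz hw c m k hk
  -- ∑ ‖v‖² ≤ ∑ ‖v‖‖g‖
  have hVV : ∑ l ∈ S, ‖v l‖ ^ 2 ≤ ∑ l ∈ S, ‖v l‖ * ‖g l‖ := by
    have h0 := horth V hV
    rw [inner_sub_right, sub_eq_zero, inner_self_eq_norm_sq_to_K] at h0
    have h1 : ‖V‖ ^ 2 = ‖inner ℂ V G‖ := by rw [h0]; simp
    have h2 : ‖V‖ ^ 2 = ∑ l ∈ S, ‖v l‖ ^ 2 := by
      rw [EuclideanSpace.norm_sq_eq, ← Finset.sum_coe_sort S]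
      exact Finset.sum_congr rfl fun l _ => by rw [hVl]
    rw [← h2, h1, PiLp.inner_apply, ← Finset.sum_coe_sort S]
    refine (norm_sum_le _ _).trans (Finset.sum_le_sum fun l _ => ?_)
    simp only [RCLike.inner_apply, norm_mul, hVl, RCLike.norm_conj]
    rw [mul_comm]
  set s1 := ∑ l ∈ S, ‖v l‖ with hs1
  set sg := ∑ l ∈ S, ‖g l‖ with hsg
  have hs1n : 0 ≤ s1 := Finset.sum_nonneg fun _ _ => norm_nonneg _
  have hsgn : 0 ≤ sg := Finset.sum_nonneg fun _ _ => norm_nonneg _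
  have hCS : s1 ^ 2 ≤ m * ∑ l ∈ S, ‖v l‖ ^ 2 := by
    have := sq_sum_le_card_mul_sum_sq (s := S) (f := fun l => ‖v l‖)
    rwa [hcard] at this
  have hup : (m : ℝ) * ∑ l ∈ S, ‖v l‖ * ‖g l‖ ≤ 12 * s1 * sg := by
    rw [Finset.mul_sum, hsg, Finset.mul_sum]
    refine Finset.sum_le_sum fun l hl => ?_
    rw [← mul_assoc]
    exact mul_le_mul_of_nonneg_right (hT l hl) (norm_nonneg _)
  have hs : s1 ≤ 12 * sg := by
    by_contra hcon
    push Not at hcon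
    have : (m : ℝ) * ∑ l ∈ S, ‖v l‖ ^ 2 ≤ 12 * s1 * sg :=
      (mul_le_mul_of_nonneg_left hVV (Nat.cast_nonneg m)).trans hup
    nlinarith
  refine ⟨fun k => if k ∈ S then g k - v k else 0, fun k hk => by simp [hk], ?_, ?_, ?_⟩
  · rw [← hzA]; exact Finset.sum_congr rfl fun k hk => by simp [hk]
  · rw [← hwB]; exact Finset.sum_congr rfl fun k hk => by simp [hk]
  · intro k hk
    simp only [hk, if_true, sub_sub_cancel]
    have := hT k hk
    linarith

end RdF

namespace RdF

/-- dyadic interval of length `2 ^ j` containing `k` -/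
noncomputable def dy (j : ℕ) (k : ℤ) : Finset ℤ := Finset.Ico (k / 2 ^ j * 2 ^ j) (k / 2 ^ j * 2 ^ j + (2 ^ j : ℕ))

lemma mem_dy {j : ℕ} {k l : ℤ} : l ∈ dy j k ↔ l / 2 ^ j = k / 2 ^ j := by
  have hpos : (0 : ℤ) < 2 ^ j := by positivity
  rw [dy, Finset.mem_Ico]
  push_cast
  constructor
  · rintro ⟨h1, h2⟩
    apply le_antisymm
    · apply Int.le_of_lt_add_one
      rw [Int.ediv_lt_iff_lt_mul hpos]
      linarith
    · rw [Int.le_ediv_iff_mul_le hpos]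
      exact h1
  · intro h
    rw [← h]
    have h1 := Int.ediv_mul_le l hpos.ne'
    have h2 := Int.lt_ediv_add_one_mul_self l hpos
    constructor
    · exact h1
    · linarith

lemma self_mem_dy (j : ℕ) (k : ℤ) : k ∈ dy j k := mem_dy.2 rfl

lemma dy_eq {j : ℕ} {k l : ℤ} (h : l ∈ dy j k) : dy j l = dy j k := by
  rw [mem_dy] at h
  simp [dy, h]

lemma dy_mono {j j' : ℕ} (hj : j ≤ j') {k l : ℤ} (h : l ∈ dy j k) : l ∈ dy j' k := by
  rw [mem_dy] at *
  obtain ⟨i, rfl⟩ := Nat.exists_eq_add_of_le hj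
  rw [pow_add, ← Int.ediv_ediv_of_nonneg (by positivity), ← Int.ediv_ediv_of_nonneg (by positivity), h]

lemma card_dy (j : ℕ) (k : ℤ) : (dy j k).card = 2 ^ j := by
  rw [dy, Int.card_Ico, add_sub_cancel_left, Int.toNat_natCast]

lemma cz (g : ℤ → ℂ) (hg : Summable fun k => ‖g k‖ ^ 2) (lam : ℝ) (hlam : 0 < lam) :
    ∃ Bs : Finset (ℤ × ℕ),
      (∀ q ∈ Bs, 0 < q.2 ∧ lam * q.2 ≤ ∑ l ∈ Finset.Ico q.1 (q.1 + q.2), ‖g l‖ ∧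
        ∑ l ∈ Finset.Ico q.1 (q.1 + q.2), ‖g l‖ ≤ 2 * lam * q.2) ∧
      (Bs : Set (ℤ × ℕ)).PairwiseDisjoint (fun q => Finset.Ico q.1 (q.1 + q.2)) ∧
      ∀ k, (∀ q ∈ Bs, k ∉ Finset.Ico q.1 (q.1 + q.2)) → ‖g k‖ ≤ lam := by
  classical
  set s : ℕ → ℤ → ℝ := fun j k => ∑ l ∈ dy j k, ‖g l‖ with hs
  set E := ∑' k, ‖g k‖ ^ 2 with hE
  let Bad : ℕ → ℤ → Prop := fun j k => lam * 2 ^ j < s j k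
  have hbad_eq : ∀ {j k l}, l ∈ dy j k → (Bad j l ↔ Bad j k) := by
    intro j k l h
    simp only [Bad, hs, dy_eq h]
  obtain ⟨J, hJ⟩ : ∃ J : ℕ, ∀ j k, Bad j k → j < J := by
    obtain ⟨J, hJ⟩ := exists_nat_gt (E / lam ^ 2)
    refine ⟨J, fun j k h => ?_⟩
    have h1 : (s j k) ^ 2 ≤ 2 ^ j * E := by
      have := sq_sum_le_card_mul_sum_sq (s := dy j k) (f := fun l => ‖g l‖)
      rw [card_dy] at this
      push_cast at this
      refine this.trans ?_
      gcongr
      exact hg.sum_le_tsum _ fun _ _ => by positivity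
    have h2 : (lam * 2 ^ j) ^ 2 < (s j k) ^ 2 := by
      have : Bad j k := h
      simp only [Bad] at this
      gcongr
    have h3 : lam ^ 2 * 2 ^ j < E := by
      have h4 : (0 : ℝ) < 2 ^ j := by positivity
      have h5 : 2 ^ j * (lam ^ 2 * 2 ^ j) < 2 ^ j * E := by nlinarith
      exact lt_of_mul_lt_mul_left h5 h4.le
    have h6 : (2 : ℝ) ^ j < E / lam ^ 2 := by
      rw [lt_div_iff₀ (by positivity)]; linarith
    have h7 : (j : ℝ) < 2 ^ j := by exact_mod_cast Nat.lt_two_pow_self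
    have : (j : ℝ) < J := by linarith
    exact_mod_cast this
  have hfin0 : {l : ℤ | lam < ‖g l‖}.Finite := by
    have h1 := hg.tendsto_cofinite_zero
    have h2 := h1.eventually (gt_mem_nhds (by positivity : (0 : ℝ) < lam ^ 2))
    rw [Filter.eventually_cofinite] at h2
    refine h2.subset fun l hl => ?_
    simp only [mem_ofPred_eq, not_lt] at *
    gcongr
  have hfin : {k : ℤ | ∃ j, Bad j k}.Finite := by
    have : ((⋃ l ∈ {l : ℤ | lam < ‖g l‖}, ⋃ j ∈ Finset.range J, (dy j l : Set ℤ))).Finite :=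
      hfin0.biUnion fun l _ => (Finset.range J).finite_toSet.biUnion fun j _ => (dy j l).finite_toSet
    refine this.subset ?_
    rintro k ⟨j, hj⟩
    have hjJ := hJ j k hj
    obtain ⟨l, hl, hl2⟩ : ∃ l ∈ dy j k, lam < ‖g l‖ := by
      by_contra hcon
      push Not at hcon
      have h1 : s j k ≤ ∑ l ∈ dy j k, lam := Finset.sum_le_sum hcon
      rw [Finset.sum_const, card_dy, nsmul_eq_mul] at h1
      push_cast at h1
      have : lam * 2 ^ j < s j k := hj
      linarith
    simp only [mem_iUnion]
    refine ⟨l, hl2, j, by simpa using hjJ, ?_⟩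
    rw [dy_eq hl]
    exact self_mem_dy j k
  let Top : ℕ → ℤ → Prop := fun j k => Bad j k ∧ ∀ j', j < j' → ¬ Bad j' k
  have htop_eq : ∀ {j k l}, l ∈ dy j k → Top j k → Top j l := by
    intro j k l h ht
    refine ⟨(hbad_eq h).2 ht.1, fun j' hj' hb => ht.2 j' hj' ?_⟩
    exact (hbad_eq (dy_mono hj'.le h)).1 hb
  have htop_uniq : ∀ {j j' k}, Top j k → Top j' k → j = j' := by
    intro j j' k h h'
    rcases lt_trichotomy j j' with hlt | heq | hgt
    · exact absurd h'.1 (h.2 _ hlt)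
    · exact heq
    · exact absurd h.1 (h'.2 _ hgt)
  have htop_ex : ∀ k, (∃ j, Bad j k) → ∃ j, Top j k := by
    rintro k ⟨j, hj⟩
    have hle : j ≤ J := (hJ j k hj).le
    refine ⟨Nat.findGreatest (fun j => Bad j k) J, Nat.findGreatest_spec (P := fun j => Bad j k) hle hj, ?_⟩
    intro j' hj' hb
    exact Nat.findGreatest_is_greatest hj' (hJ j' k hb).le hb
  let Bs : Finset (ℤ × ℕ) := ((hfin.toFinset ×ˢ Finset.range J).filter fun q => Top q.2 q.1).image
    fun q => (q.1 / 2 ^ q.2 * 2 ^ q.2, 2 ^ q.2)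
  have hBs : ∀ q, q ∈ Bs ↔ ∃ j k, Top j k ∧ q = (k / 2 ^ j * 2 ^ j, 2 ^ j) := by
    intro q
    simp only [Bs, Finset.mem_image, Finset.mem_filter, Finset.mem_product, Finset.mem_range,
      Set.Finite.mem_toFinset, mem_ofPred_eq, Prod.exists]
    constructor
    · rintro ⟨k, j, ⟨_, h⟩, rfl⟩
      exact ⟨j, k, h, rfl⟩
    · rintro ⟨j, k, h, rfl⟩
      exact ⟨k, j, ⟨⟨⟨j, h.1⟩, hJ j k h.1⟩, h⟩, rfl⟩
  refine ⟨Bs, ?_, ?_, ?_⟩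
  · intro q hq
    obtain ⟨j, k, ht, rfl⟩ := (hBs q).1 hq
    refine ⟨by positivity, ?_, ?_⟩
    · have : lam * 2 ^ j < s j k := ht.1
      push_cast
      simp only [hs, dy] at this
      push_cast at this
      exact this.le
    · have h1 : ¬ Bad (j + 1) k := ht.2 _ (Nat.lt_succ_self j)
      simp only [Bad, not_lt] at h1
      have h2 : s j k ≤ s (j + 1) k :=
        Finset.sum_le_sum_of_subset_of_nonneg (fun l hl => dy_mono (Nat.le_succ j) hl)
          fun _ _ _ => norm_nonneg _
      have h3 := h2.trans h1
      change s j k ≤ _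
      push_cast
      rw [pow_succ] at h3
      linarith
  · intro q hq q' hq' hne
    obtain ⟨j, k, ht, rfl⟩ := (hBs q).1 hq
    obtain ⟨j', k', ht', rfl⟩ := (hBs q').1 hq'
    change Disjoint (dy j k) (dy j' k')
    rw [Finset.disjoint_left]
    intro l hl hl'
    have := htop_uniq (htop_eq hl ht) (htop_eq hl' ht')
    subst this
    apply hne
    rw [mem_dy] at hl hl'
    rw [← hl, ← hl']
  · intro k hk
    by_contra hcon
    push Not at hcon
    have : Bad 0 k := by
      simp only [Bad, hs, dy]
      have h1 : Finset.Ico k (k + 1) = {k} := by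
        ext x
        simp only [Finset.mem_Ico, Finset.mem_singleton]
        omega
      simpa [h1] using hcon
    obtain ⟨j, hj⟩ := htop_ex k ⟨0, this⟩
    exact hk _ ((hBs _).2 ⟨j, k, hj, rfl⟩) (self_mem_dy j k)

end RdF

namespace RdF

lemma fourierCoef_setIntegral (f : ℝ → ℂ) (n : ℤ) :
    fourierCoef f n = (1 / (2 * (π : ℂ))) *
      ∫ t in Ioc 0 (2 * π), f t * Complex.exp (-Complex.I * (n : ℂ) * (t : ℂ)) := by
  rw [fourierCoef, intervalIntegral.integral_of_le (by positivity)]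

lemma integrable_mul_exp {f : ℝ → ℂ} (hf : IntegrableOn f (Ioc 0 (2 * π))) (n : ℤ) :
    IntegrableOn (fun t => f t * Complex.exp (-Complex.I * (n : ℂ) * (t : ℂ))) (Ioc 0 (2 * π)) := by
  refine Integrable.mul_bdd (c := 1) hf ?_ (Filter.Eventually.of_forall fun t => ?_)
  · exact Continuous.aestronglyMeasurable (by fun_prop)
  · rw [Complex.norm_exp]
    simp

lemma coef_congr {f g : ℝ → ℂ} (h : f =ᵐ[volume.restrict (Ioc 0 (2 * π))] g) (n : ℤ) :
    fourierCoef f n = fourierCoef g n := by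
  rw [fourierCoef_setIntegral, fourierCoef_setIntegral]
  congr 1
  apply integral_congr_ae
  filter_upwards [h] with t ht
  rw [ht]

lemma coef_add {f g : ℝ → ℂ} (hf : IntegrableOn f (Ioc 0 (2 * π)))
    (hg : IntegrableOn g (Ioc 0 (2 * π))) (n : ℤ) :
    fourierCoef (fun t => f t + g t) n = fourierCoef f n + fourierCoef g n := by
  simp only [fourierCoef_setIntegral, add_mul]
  rw [integral_add (integrable_mul_exp hf n) (integrable_mul_exp hg n), mul_add]

lemma coef_const_mul (c : ℂ) (f : ℝ → ℂ) (n : ℤ) :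
    fourierCoef (fun t => c * f t) n = c * fourierCoef f n := by
  simp only [fourierCoef_setIntegral, mul_assoc]
  rw [integral_const_mul]
  ring

lemma coef_sum {ι : Type*} (s : Finset ι) (f : ι → ℝ → ℂ)
    (hf : ∀ i ∈ s, IntegrableOn (f i) (Ioc 0 (2 * π))) (n : ℤ) :
    fourierCoef (fun t => ∑ i ∈ s, f i t) n = ∑ i ∈ s, fourierCoef (f i) n := by
  simp only [fourierCoef_setIntegral, Finset.sum_mul]
  rw [integral_finsetSum s fun i hi => integrable_mul_exp (hf i hi) n, Finset.mul_sum]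

/-- The Dirichlet-type kernel of the interval `[a, b]`. -/
noncomputable def Dk (a b : ℝ) (m : ℤ) : ℂ :=
  (1 / (2 * (π : ℂ))) * ∫ t in a..b, Complex.exp ((-Complex.I * (m : ℂ)) * (t : ℂ))

lemma Dk_eq (a b : ℝ) (m : ℤ) (hm : m ≠ 0) :
    Dk a b m = (1 / (2 * (π : ℂ))) * ((Complex.I * Complex.exp (-Complex.I * b) ^ m / m)
      - (Complex.I * Complex.exp (-Complex.I * a) ^ m / m)) := by
  have hm' : (m : ℂ) ≠ 0 := by exact_mod_cast hm
  rw [Dk, integral_exp_mul_complex (mul_ne_zero (neg_ne_zero.2 Complex.I_ne_zero) hm')]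
  congr 1
  rw [← Complex.exp_int_mul, ← Complex.exp_int_mul]
  have e1 : (-Complex.I * m * b) = m * (-Complex.I * b) := by ring
  have e2 : (-Complex.I * m * a) = m * (-Complex.I * a) := by ring
  rw [e1, e2]
  field_simp
  rw [Complex.I_sq]
  ring

lemma coef_ind_exp {a b : ℝ} (hab : a ≤ b) (hsub : Icc a b ⊆ Ico 0 (2 * π)) (k n : ℤ) :
    fourierCoef ((Icc a b).indicator fun t => Complex.exp (Complex.I * k * t)) n = Dk a b (n - k) := by
  rw [fourierCoef_setIntegral, Dk]
  congr 1
  have h1 : ∀ t : ℝ, (Icc a b).indicator (fun t : ℝ => Complex.exp (Complex.I * k * t)) t *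
      Complex.exp (-Complex.I * n * t) =
      (Icc a b).indicator (fun t : ℝ => Complex.exp ((-Complex.I * ((n - k : ℤ) : ℂ)) * (t : ℂ))) t := by
    intro t
    by_cases ht : t ∈ Icc a b
    · simp only [ht, indicator_of_mem]
      rw [← Complex.exp_add]
      congr 1
      push_cast
      ring
    · simp [ht]
  simp_rw [h1]
  rw [integral_indicator measurableSet_Icc, Measure.restrict_restrict measurableSet_Icc,
    intervalIntegral.integral_of_le hab]
  apply setIntegral_congr_set
  have ha := hsub (left_mem_Icc.2 hab)
  have hb := hsub (right_mem_Icc.2 hab)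
  have : Ioc a b ⊆ Icc a b ∩ Ioc 0 (2 * π) := fun t ht =>
    ⟨Ioc_subset_Icc_self ht, lt_of_le_of_lt ha.1 ht.1, ht.2.trans hb.2.le⟩
  refine Filter.EventuallyLE.antisymm ?_ (LE.le.eventuallyLE this)
  exact (LE.le.eventuallyLE inter_subset_left).trans (Ioc_ae_eq_Icc (μ := volume)).symm.le

lemma coef_exp (k n : ℤ) :
    fourierCoef (fun t => Complex.exp (Complex.I * k * t)) n = if n = k then 1 else 0 := by
  have h0 : ∀ t : ℝ, Complex.exp (Complex.I * k * t) * Complex.exp (-Complex.I * n * t) =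
      Complex.exp ((-Complex.I * ((n - k : ℤ) : ℂ)) * (t : ℂ)) := by
    intro t
    rw [← Complex.exp_add]
    congr 1
    push_cast
    ring
  have hd : fourierCoef (fun t => Complex.exp (Complex.I * k * t)) n = Dk 0 (2 * π) (n - k) := by
    rw [fourierCoef, Dk]
    simp_rw [h0]
  rw [hd]
  have hpi : (π : ℂ) ≠ 0 := by exact_mod_cast Real.pi_ne_zero
  split_ifs with h
  · subst h
    simp [Dk]
    field_simp
  · rw [Dk_eq _ _ _ (sub_ne_zero.2 h)]
    have : Complex.exp (-Complex.I * ((2 * π : ℝ) : ℂ)) = 1 := by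
      rw [Complex.exp_eq_one_iff]
      exact ⟨-1, by push_cast; ring⟩
    rw [this]
    simp

lemma kern1 (β : ℤ → ℂ) (z : ℂ) (hz : ‖z‖ = 1) (c : ℤ) (m : ℕ)
    (h0 : ∑ k ∈ Finset.Ico c (c + m), β k * z ^ (-k) = 0) (n : ℤ)
    (hn : n < c - m ∨ c + 2 * m ≤ n) :
    ‖∑ k ∈ Finset.Ico c (c + m), β k * (z ^ (n - k) / ((n - k : ℤ) : ℂ))‖ ≤
      (2 * m / ((n - c : ℤ) : ℝ) ^ 2) * ∑ k ∈ Finset.Ico c (c + m), ‖β k‖ := by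
  have hz0 : z ≠ 0 := by rintro rfl; simp at hz
  by_cases hm : m = 0
  · subst hm; simp
  have e : ∑ k ∈ Finset.Ico c (c + m), β k * (z ^ (n - k) / ((n - k : ℤ) : ℂ)) =
      ∑ k ∈ Finset.Ico c (c + m), β k * z ^ (n - k) *
        (1 / ((n - k : ℤ) : ℂ) - 1 / ((n - c : ℤ) : ℂ)) := by
    have : ∑ k ∈ Finset.Ico c (c + m), β k * z ^ (n - k) * (1 / ((n - c : ℤ) : ℂ)) = 0 := by
      rw [← Finset.sum_mul]
      have : ∑ k ∈ Finset.Ico c (c + m), β k * z ^ (n - k) = 0 := by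
        rw [← mul_zero (z ^ n), ← h0, Finset.mul_sum]
        refine Finset.sum_congr rfl fun k _ => ?_
        rw [sub_eq_add_neg, zpow_add₀ hz0]; ring
      rw [this, zero_mul]
    simp only [mul_sub, Finset.sum_sub_distrib, this, sub_zero]
    refine Finset.sum_congr rfl fun k _ => ?_
    ring
  rw [e, Finset.mul_sum]
  refine (norm_sum_le _ _).trans (Finset.sum_le_sum fun k hk => ?_)
  rw [Finset.mem_Ico] at hk
  rw [norm_mul, norm_mul, norm_zpow, hz, one_zpow, mul_one, mul_comm]
  gcongr
  have h1 : (1 / ((n - k : ℤ) : ℂ) - 1 / ((n - c : ℤ) : ℂ)) =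
      (((k - c : ℤ) : ℝ) / (((n - k : ℤ) : ℝ) * ((n - c : ℤ) : ℝ)) : ℝ) := by
    have a1 : ((n : ℂ) - k) ≠ 0 := by
      have : n - k ≠ 0 := by omega
      exact_mod_cast this
    have a2 : ((n : ℂ) - c) ≠ 0 := by
      have : n - c ≠ 0 := by omega
      exact_mod_cast this
    push_cast
    field_simp
    ring
  rw [h1, Complex.norm_real, Real.norm_eq_abs, abs_div, abs_mul]
  have hA : |((k - c : ℤ) : ℝ)| ≤ m := by
    have : |k - c| ≤ m := by rw [abs_le]; omega
    exact_mod_cast this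
  have hB : |((n - c : ℤ) : ℝ)| ≤ 2 * |((n - k : ℤ) : ℝ)| := by
    have : |n - c| ≤ 2 * |n - k| := by
      rcases hn with h | h
      · rw [abs_of_nonpos (by omega), abs_of_nonpos (by omega)]; omega
      · rw [abs_of_nonneg (by omega), abs_of_nonneg (by omega)]; omega
    exact_mod_cast this
  have hC : 0 < |((n - c : ℤ) : ℝ)| := by
    rw [abs_pos]
    have : n - c ≠ 0 := by omega
    exact_mod_cast this
  have hD : 0 < |((n - k : ℤ) : ℝ)| := by linarith
  rw [← sq_abs ((n - c : ℤ) : ℝ), div_le_div_iff₀ (by positivity) (by positivity)]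
  set x := |((n - c : ℤ) : ℝ)|
  set y := |((n - k : ℤ) : ℝ)|
  calc |((k - c : ℤ) : ℝ)| * x ^ 2 ≤ m * x ^ 2 := by gcongr
    _ = m * x * x := by ring
    _ ≤ m * x * (2 * y) := by gcongr
    _ = 2 * m * (y * x) := by ring

/-- The error weight of a bad interval. -/
noncomputable def Ew (c : ℤ) (m : ℕ) (n : ℤ) : ℝ≥0∞ :=
  if n < c - m ∨ c + 2 * m ≤ n then ENNReal.ofReal (580 * m * (m / ((n - c : ℤ) : ℝ) ^ 2)) else 1

lemma tail_nat (m : ℕ) (hm : 0 < m) :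
    ∑' r : ℕ, (if m ≤ r then ENNReal.ofReal (m / (r : ℝ) ^ 2) else 0) ≤ 2 := by
  refine ENNReal.tsum_le_of_sum_range_le fun N => ?_
  rw [← Finset.sum_filter, ← ENNReal.ofReal_sum_of_nonneg (fun _ _ => by positivity)]
  have hsub : (Finset.range N).filter (fun r => m ≤ r) = Finset.Ioo (m - 1) N := by
    ext r; simp only [Finset.mem_filter, Finset.mem_range, Finset.mem_Ioo]; omega
  rw [hsub]
  have h1 := sum_Ioo_inv_sq_le (α := ℝ) (m - 1) N
  have h2 : ((m - 1 : ℕ) : ℝ) + 1 = m := by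
    have : m - 1 + 1 = m := by omega
    exact_mod_cast this
  rw [h2] at h1
  have hm' : (0 : ℝ) < m := by exact_mod_cast hm
  have h3 : ∑ r ∈ Finset.Ioo (m - 1) N, (m : ℝ) / (r : ℝ) ^ 2 ≤ 2 := by
    simp only [div_eq_mul_inv]
    rw [← Finset.mul_sum]
    calc _ ≤ (m : ℝ) * (2 / m) := by gcongr
      _ = 2 := by field_simp
  calc _ ≤ ENNReal.ofReal 2 := ENNReal.ofReal_le_ofReal h3
    _ = 2 := by simp

lemma tail_int (c : ℤ) (m : ℕ) (hm : 0 < m) :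
    ∑' n : ℤ, (if n < c - m ∨ c + 2 * m ≤ n then
      ENNReal.ofReal (m / ((n - c : ℤ) : ℝ) ^ 2) else 0) ≤ 4 := by
  rw [← (Equiv.addRight c).tsum_eq]
  rw [tsum_of_nat_of_neg_add_one ENNReal.summable ENNReal.summable]
  have e4 : (4 : ℝ≥0∞) = 2 + 2 := by norm_num
  rw [e4]
  gcongr
  · refine le_trans (ENNReal.tsum_le_tsum fun r => ?_) (tail_nat m hm)
    simp only [Equiv.coe_addRight, add_sub_cancel_right, Int.cast_natCast]
    split_ifs with h1 h2
    · exact le_rfl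
    · omega
    · exact zero_le
    · exact le_rfl
  · refine le_trans ?_ (tail_nat m hm)
    let F : ℕ → ℝ≥0∞ := fun r => if m ≤ r then ENNReal.ofReal (m / (r : ℝ) ^ 2) else 0
    refine le_trans (ENNReal.tsum_le_tsum (g := fun r => F (r + 1)) fun r => ?_)
      (ENNReal.tsum_comp_le_tsum_of_injective (add_left_injective 1) F)
    simp only [Equiv.coe_addRight, add_sub_cancel_right, F]
    split_ifs with h1 h2
    · push_cast
      rw [neg_sq]
    · omega
    · exact zero_le
    · exact le_rfl

lemma Ew_sum (c : ℤ) (m : ℕ) (hm : 0 < m) : ∑' n, Ew c m n ≤ ENNReal.ofReal (2400 * m) := by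
  have h1 : ∀ n, Ew c m n ≤ ENNReal.ofReal (580 * m) * (if n < c - m ∨ c + 2 * m ≤ n then
      ENNReal.ofReal (m / ((n - c : ℤ) : ℝ) ^ 2) else 0) +
      (if n ∈ Finset.Ico (c - m) (c + 2 * m) then 1 else 0) := by
    intro n
    rw [Ew]
    split_ifs with h2 h3 h4
    · rw [← ENNReal.ofReal_mul (by positivity)]; exact le_self_add
    · rw [← ENNReal.ofReal_mul (by positivity)]; exact le_self_add
    · simp
    · exfalso; apply h4; rw [Finset.mem_Ico]; omega
  refine (ENNReal.tsum_le_tsum h1).trans ?_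
  rw [ENNReal.tsum_add, ENNReal.tsum_mul_left]
  have h2 : ∑' n : ℤ, (if n ∈ Finset.Ico (c - m) (c + 2 * m) then (1 : ℝ≥0∞) else 0) =
      ENNReal.ofReal (3 * m) := by
    rw [tsum_eq_sum (s := Finset.Ico (c - m) (c + 2 * m)) (fun n hn => by simp [hn])]
    rw [Finset.sum_congr rfl fun n hn => if_pos hn]
    rw [Finset.sum_const, Int.card_Ico]
    have : (c + 2 * m - (c - m)).toNat = 3 * m := by omega
    rw [this, nsmul_eq_mul, mul_one]
    have h3 : (3 * (m : ℝ)) = ((3 * m : ℕ) : ℝ) := by push_cast; ring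
    rw [h3, ENNReal.ofReal_natCast]
  rw [h2]
  calc _ ≤ ENNReal.ofReal (580 * m) * ENNReal.ofReal 4 + ENNReal.ofReal (3 * m) := by
        gcongr
        refine (tail_int c m hm).trans ?_
        simp
    _ = ENNReal.ofReal (580 * m * 4 + 3 * m) := by
        rw [← ENNReal.ofReal_mul (by positivity), ENNReal.ofReal_add (by positivity) (by positivity)]
    _ ≤ _ := by
        apply ENNReal.ofReal_le_ofReal
        have : (0 : ℝ) ≤ m := Nat.cast_nonneg m
        linarith

lemma bad_piece (β : ℤ → ℂ) (a b lam : ℝ) (hlam : 0 < lam) (c : ℤ) (m : ℕ)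
    (hza : ∑ k ∈ Finset.Ico c (c + m), β k * Complex.exp (-Complex.I * a) ^ (-k) = 0)
    (hzb : ∑ k ∈ Finset.Ico c (c + m), β k * Complex.exp (-Complex.I * b) ^ (-k) = 0)
    (h1 : ∑ k ∈ Finset.Ico c (c + m), ‖β k‖ ≤ 290 * lam * m) (n : ℤ) (hn : Ew c m n < 1) :
    2 * ‖∑ k ∈ Finset.Ico c (c + m), β k * Dk a b (n - k)‖ₑ ≤ ENNReal.ofReal lam * Ew c m n := by
  rw [Ew] at hn ⊢
  split_ifs at hn ⊢ with h
  swap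
  · exact absurd hn (lt_irrefl _)
  have hua : ‖Complex.exp (-Complex.I * a)‖ = 1 := by simp [Complex.norm_exp]
  have hub : ‖Complex.exp (-Complex.I * b)‖ = 1 := by simp [Complex.norm_exp]
  have ka := kern1 β _ hua c m hza n h
  have kb := kern1 β _ hub c m hzb n h
  set SA := ∑ k ∈ Finset.Ico c (c + m), β k * (Complex.exp (-Complex.I * a) ^ (n - k) / ((n - k : ℤ) : ℂ))
  set SB := ∑ k ∈ Finset.Ico c (c + m), β k * (Complex.exp (-Complex.I * b) ^ (n - k) / ((n - k : ℤ) : ℂ))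
  have e : ∑ k ∈ Finset.Ico c (c + m), β k * Dk a b (n - k) =
      (1 / (2 * (π : ℂ))) * Complex.I * (SB - SA) := by
    simp only [SA, SB, ← Finset.sum_sub_distrib, Finset.mul_sum]
    refine Finset.sum_congr rfl fun k hk => ?_
    rw [Finset.mem_Ico] at hk
    rw [Dk_eq _ _ _ (by omega)]
    ring
  set X := (2 * m / ((n - c : ℤ) : ℝ) ^ 2) * ∑ k ∈ Finset.Ico c (c + m), ‖β k‖
  have hX0 : 0 ≤ X := by positivity
  have hnorm : ‖∑ k ∈ Finset.Ico c (c + m), β k * Dk a b (n - k)‖ ≤ X / 2 := by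
    rw [e, norm_mul, norm_mul, Complex.norm_I, mul_one]
    have hp : ‖(1 / (2 * (π : ℂ)))‖ ≤ 1 / 4 := by
      rw [norm_div, norm_mul, Complex.norm_real, Real.norm_of_nonneg pi_pos.le]
      simp only [norm_one, Complex.norm_ofNat]
      apply one_div_le_one_div_of_le (by norm_num)
      linarith [Real.pi_gt_three]
    have hs : ‖SB - SA‖ ≤ 2 * X := (norm_sub_le _ _).trans (by linarith)
    calc _ ≤ 1 / 4 * (2 * X) := by gcongr
      _ = X / 2 := by ring
  have hX : X ≤ lam * (580 * m * (m / ((n - c : ℤ) : ℝ) ^ 2)) := by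
    calc X ≤ (2 * m / ((n - c : ℤ) : ℝ) ^ 2) * (290 * lam * m) :=
          mul_le_mul_of_nonneg_left h1 (by positivity)
      _ = _ := by ring
  rw [← ENNReal.ofReal_mul hlam.le, ← ofReal_norm]
  have : (2 : ℝ≥0∞) = ENNReal.ofReal 2 := by simp
  rw [this, ← ENNReal.ofReal_mul (by norm_num)]
  apply ENNReal.ofReal_le_ofReal
  linarith

end RdF

namespace RdF

/-- The comparison function `min (t, t²)` at `t = ‖x‖ / lam`. -/
noncomputable def Phi (lam : ℝ) (x : ℂ) : ℝ := min (‖x‖ / lam) ((‖x‖ / lam) ^ 2)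

lemma Phi_nonneg {lam : ℝ} (hlam : 0 < lam) (x : ℂ) : 0 ≤ Phi lam x := by
  rw [Phi]; positivity

lemma Phi_summable {lam : ℝ} (hlam : 0 < lam) {g : ℤ → ℂ} (hg : Summable fun k => ‖g k‖ ^ 2) :
    Summable fun k => Phi lam (g k) := by
  refine Summable.of_nonneg_of_le (fun k => Phi_nonneg hlam _) (fun k => min_le_right _ _) ?_
  simp only [div_pow]
  exact hg.div_const _

lemma le_Phi {lam : ℝ} (hlam : 0 < lam) (x : ℂ) : ‖x‖ ≤ lam / 2 + 2 * lam * Phi lam x := by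
  have h : ‖x‖ = lam * (‖x‖ / lam) := by field_simp
  rw [Phi]
  set t := ‖x‖ / lam
  have ht : 0 ≤ t := by positivity
  rw [h]
  have : t ≤ 1 / 2 + 2 * min t (t ^ 2) := by
    rcases le_total t (t ^ 2) with h1 | h1
    · rw [min_eq_left h1]; linarith
    · rw [min_eq_right h1]; nlinarith [sq_nonneg (t - 1 / 4)]
  calc lam * t ≤ lam * (1 / 2 + 2 * min t (t ^ 2)) := by gcongr
    _ = _ := by ring

lemma sq_eq_Phi {lam : ℝ} (hlam : 0 < lam) (x : ℂ) (hx : ‖x‖ ≤ lam) :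
    ‖x‖ ^ 2 = lam ^ 2 * Phi lam x := by
  have h : ‖x‖ = lam * (‖x‖ / lam) := by field_simp
  rw [Phi]
  have h1 : ‖x‖ / lam ≤ 1 := by rw [div_le_one hlam]; exact hx
  have h2 : 0 ≤ ‖x‖ / lam := by positivity
  rw [min_eq_right (by nlinarith), ← mul_pow, ← h]

lemma one_nu {f : ℝ → ℂ} (hf : IntegrableOn f (Ioc 0 (2 * π))) {a b : ℝ} (hab : a ≤ b)
    (hsub : Icc a b ⊆ Ico 0 (2 * π))
    (hsupp : ∀ᵐ t ∂(volume.restrict (Ioc 0 (2 * π))), t ∉ Icc a b → f t = 0)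
    (hg : Summable fun k => ‖fourierCoef f k‖ ^ 2) {lam : ℝ} (hlam : 0 < lam) :
    ∃ (h : ℝ → ℂ) (w : ℤ → ℂ) (E : ℤ → ℝ≥0∞), MemLp h 2 (volume.restrict (Ioc 0 (2 * π))) ∧
      (∀ t, t ∉ Icc a b → h t = 0) ∧
      (∀ n, fourierCoef f n = fourierCoef h n + w n) ∧
      (2 * π)⁻¹ * ∫ t in Ioc 0 (2 * π), ‖h t‖ ^ 2 ≤
        1000000 * lam ^ 2 * ∑' k, Phi lam (fourierCoef f k) ∧
      ∑' n, E n ≤ ENNReal.ofReal (10000 * ∑' k, Phi lam (fourierCoef f k)) ∧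
      ∀ n, E n < 1 → 2 * ‖w n‖ₑ ≤ ENNReal.ofReal lam * E n := by
  classical
  set g := fun k => fourierCoef f k with hgdef
  obtain ⟨Bs, hBs, hdisj, hoff⟩ := cz g hg lam hlam
  set I : ℤ × ℕ → Finset ℤ := fun q => Finset.Ico q.1 (q.1 + q.2) with hI
  have hua : ‖Complex.exp (-Complex.I * a)‖ = 1 := by simp [Complex.norm_exp]
  have hub : ‖Complex.exp (-Complex.I * b)‖ = 1 := by simp [Complex.norm_exp]
  have hproj := fun q : ℤ × ℕ => proj g _ _ hua hub q.1 q.2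
  choose β hβ0 hβa hβb hβ using hproj
  have hPs : Summable fun k => Phi lam (g k) := Phi_summable hlam hg
  set P := ∑' k, Phi lam (g k) with hP
  -- total length of the bad intervals
  have hlen : ∑ q ∈ Bs, (q.2 : ℝ) ≤ 4 * P := by
    have h1 : ∀ q ∈ Bs, (q.2 : ℝ) ≤ 4 * ∑ l ∈ I q, Phi lam (g l) := by
      intro q hq
      obtain ⟨_, h2, _⟩ := hBs q hq
      have h3 : ∑ l ∈ I q, ‖g l‖ ≤ ∑ l ∈ I q, (lam / 2 + 2 * lam * Phi lam (g l)) :=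
        Finset.sum_le_sum fun l _ => le_Phi hlam _
      rw [Finset.sum_add_distrib, Finset.sum_const, ← Finset.mul_sum] at h3
      have hcard : (I q).card = q.2 := by simp [hI]
      rw [hcard, nsmul_eq_mul] at h3
      have h4 : lam * q.2 ≤ q.2 * (lam / 2) + 2 * lam * ∑ l ∈ I q, Phi lam (g l) := h2.trans h3
      have h5 : lam * q.2 ≤ lam * (4 * ∑ l ∈ I q, Phi lam (g l)) := by linarith
      exact le_of_mul_le_mul_left h5 hlam
    refine (Finset.sum_le_sum h1).trans ?_
    rw [← Finset.mul_sum, ← Finset.sum_biUnion hdisj]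
    gcongr
    exact hPs.sum_le_tsum _ fun _ _ => Phi_nonneg hlam _
  have hPn : 0 ≤ P := tsum_nonneg fun _ => Phi_nonneg hlam _
  have hβnear : ∀ q ∈ Bs, ∀ k ∈ I q, ‖g k - β q k‖ ≤ 288 * lam := by
    intro q hq k hk
    obtain ⟨h1, _, h3⟩ := hBs q hq
    have h4 := hβ q k hk
    have h1' : (0 : ℝ) < q.2 := by exact_mod_cast h1
    have h5 : (q.2 : ℝ) * ‖g k - β q k‖ ≤ q.2 * (288 * lam) := by linarith
    exact le_of_mul_le_mul_left h5 h1'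
  have hβsum : ∀ q ∈ Bs, ∑ k ∈ I q, ‖β q k‖ ≤ 290 * lam * q.2 := by
    intro q hq
    obtain ⟨h1, _, h3⟩ := hBs q hq
    have h4 : ∑ k ∈ I q, ‖β q k‖ ≤ ∑ k ∈ I q, (‖g k‖ + 288 * lam) := by
      refine Finset.sum_le_sum fun k hk => ?_
      have := hβnear q hq k hk
      have h5 : ‖β q k‖ ≤ ‖g k‖ + ‖g k - β q k‖ := by
        have := norm_sub_le (g k) (g k - β q k)
        rwa [sub_sub_cancel] at this
      linarith
    rw [Finset.sum_add_distrib, Finset.sum_const] at h4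
    have hcard : (I q).card = q.2 := by simp [hI]
    rw [hcard, nsmul_eq_mul] at h4
    change ∑ l ∈ I q, ‖g l‖ ≤ 2 * lam * q.2 at h3
    linarith
  -- trigonometric polynomial
  let e : ℤ → ℝ → ℂ := fun k t => Complex.exp (Complex.I * k * t)
  have hec : ∀ k, Continuous (e k) := fun k => by simp only [e]; fun_prop
  let Bq : ℤ × ℕ → ℝ → ℂ := fun q t => ∑ k ∈ I q, β q k * e k t
  let B : ℝ → ℂ := fun t => ∑ q ∈ Bs, Bq q t
  have hBqc : ∀ q, Continuous (Bq q) := fun q => by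
    refine continuous_finsetSum _ fun k _ => ?_
    exact continuous_const.mul (hec k)
  have hBc : Continuous B := continuous_finsetSum _ fun q _ => hBqc q
  have h_integ : ∀ u : ℝ → ℂ, Continuous u → IntegrableOn u (Ioc 0 (2 * π)) := fun u hu =>
    (hu.integrableOn_Icc (a := 0) (b := 2 * π)).mono_set Ioc_subset_Icc_self
  have hBqcoef : ∀ q n, fourierCoef (Bq q) n = β q n := by
    intro q n
    change fourierCoef (fun t => ∑ k ∈ I q, β q k * e k t) n = _
    rw [coef_sum (I q) (fun k t => β q k * e k t)
      (fun k _ => h_integ _ (continuous_const.mul (hec k))) n]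
    simp only [coef_const_mul, e, coef_exp]
    by_cases hn : n ∈ I q
    · simp [hn]
    · rw [hβ0 q n hn]
      simp [hn]
  have hBcoef : ∀ n, fourierCoef B n = ∑ q ∈ Bs, β q n := by
    intro n
    rw [coef_sum _ _ fun q _ => h_integ _ (hBqc q)]
    simp only [hBqcoef]
  have hf2 : MemLp f 2 (volume.restrict (Ioc 0 (2 * π))) := memLp_two hf hg
  have hB2 : MemLp B 2 (volume.restrict (Ioc 0 (2 * π))) := by
    obtain ⟨C, hC⟩ := (isCompact_Icc (a := (0 : ℝ)) (b := 2 * π)).exists_bound_of_continuousOn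
      hBc.continuousOn
    refine MemLp.of_bound hBc.aestronglyMeasurable C ?_
    filter_upwards [ae_restrict_mem measurableSet_Ioc] with t ht
    exact hC t (Ioc_subset_Icc_self ht)
  let G : ℝ → ℂ := fun t => f t + (-1 : ℂ) * B t
  have hG2 : MemLp G 2 (volume.restrict (Ioc 0 (2 * π))) := hf2.add (hB2.const_mul _)
  have hGcoef : ∀ n, fourierCoef G n = g n - ∑ q ∈ Bs, β q n := by
    intro n
    change fourierCoef (fun t => f t + (-1 : ℂ) * B t) n = _
    rw [coef_add (g := fun t => (-1 : ℂ) * B t) hf (h_integ _ (continuous_const.mul hBc)) n,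
      coef_const_mul, hBcoef]
    simp only [hgdef]; ring
  have hparG := parseval hG2
  have hgood : (2 * π)⁻¹ * ∫ t in Ioc 0 (2 * π), ‖G t‖ ^ 2 ≤ 1000000 * lam ^ 2 * P := by
    have hpt : ∀ n, ‖fourierCoef G n‖ ^ 2 ≤ lam ^ 2 * Phi lam (g n) +
        ∑ q ∈ Bs, (if n ∈ I q then (288 * lam) ^ 2 else 0) := by
      intro n
      rw [hGcoef]
      by_cases hn : ∃ q ∈ Bs, n ∈ I q
      · obtain ⟨q, hq, hnq⟩ := hn
        have h1 : ∑ q' ∈ Bs, β q' n = β q n := by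
          refine Finset.sum_eq_single_of_mem q hq fun q' hq' hne => ?_
          apply hβ0
          intro hn'
          exact (Finset.disjoint_left.1 (hdisj hq' hq hne)) hn' hnq
        rw [h1]
        have h2 : (288 * lam) ^ 2 ≤ ∑ q ∈ Bs, (if n ∈ I q then (288 * lam) ^ 2 else 0) := by
          have := Finset.single_le_sum (f := fun q => if n ∈ I q then (288 * lam) ^ 2 else 0)
            (s := Bs) (fun i _ => by split_ifs <;> positivity) hq
          simpa [hnq] using this
        have h3 : ‖g n - β q n‖ ^ 2 ≤ (288 * lam) ^ 2 := by
          gcongr; exact hβnear q hq n hnq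
        have := mul_nonneg (sq_nonneg lam) (Phi_nonneg hlam (g n))
        linarith
      · push Not at hn
        have h1 : ∑ q' ∈ Bs, β q' n = 0 := Finset.sum_eq_zero fun q hq => hβ0 q n (hn q hq)
        rw [h1, sub_zero, sq_eq_Phi hlam _ (hoff n hn)]
        have : 0 ≤ ∑ q ∈ Bs, (if n ∈ I q then (288 * lam) ^ 2 else 0) :=
          Finset.sum_nonneg fun i _ => by split_ifs <;> positivity
        linarith
    have hsumq : ∀ q ∈ Bs, HasSum (fun n => if n ∈ I q then (288 * lam) ^ 2 else 0)
        ((q.2 : ℝ) * (288 * lam) ^ 2) := by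
      intro q hq
      have h1 := hasSum_sum_of_ne_finset_zero (s := I q) (L := SummationFilter.unconditional ℤ)
        (f := fun n => if n ∈ I q then (288 * lam) ^ 2 else 0) (fun n hn => by simp [hn])
      have hcard : (I q).card = q.2 := by simp [hI]
      rw [Finset.sum_congr rfl fun n hn => if_pos hn, Finset.sum_const, hcard, nsmul_eq_mul] at h1
      exact h1
    have hR := (hPs.hasSum.mul_left (lam ^ 2)).add (hasSum_sum hsumq)
    have h1 := hasSum_le hpt hparG hR
    refine h1.trans ?_
    rw [← Finset.sum_mul]
    have h2 : (∑ q ∈ Bs, (q.2 : ℝ)) * (288 * lam) ^ 2 ≤ 4 * P * (288 * lam) ^ 2 := by gcongr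
    have h3 : 0 ≤ lam ^ 2 * P := by positivity
    nlinarith
  -- assemble
  refine ⟨(Icc a b).indicator G, fun n => ∑ q ∈ Bs, ∑ k ∈ I q, β q k * Dk a b (n - k),
    fun n => ∑ q ∈ Bs, Ew q.1 q.2 n, hG2.indicator measurableSet_Icc,
    fun t ht => indicator_of_notMem ht _, ?_, ?_, ?_, ?_⟩
  · intro n
    have hw : fourierCoef ((Icc a b).indicator B) n =
        ∑ q ∈ Bs, ∑ k ∈ I q, β q k * Dk a b (n - k) := by
      have h1 : (Icc a b).indicator B =
          fun t => ∑ q ∈ Bs, ∑ k ∈ I q, β q k * (Icc a b).indicator (e k) t := by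
        ext t
        by_cases ht : t ∈ Icc a b <;> simp [ht, B, Bq]
      have h2 : ∀ q k, IntegrableOn (fun t => β q k * (Icc a b).indicator (e k) t) (Ioc 0 (2 * π)) :=
        fun q k => (Integrable.indicator (h_integ _ (hec k)) measurableSet_Icc).const_mul _
      rw [h1, coef_sum _ _ fun q _ => integrable_finsetSum _ fun k _ => h2 q k]
      refine Finset.sum_congr rfl fun q _ => ?_
      rw [coef_sum _ _ fun k _ => h2 q k]
      refine Finset.sum_congr rfl fun k _ => ?_
      rw [coef_const_mul, coef_ind_exp hab hsub]
    dsimp only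
    rw [← hw, ← coef_add]
    · apply coef_congr
      filter_upwards [hsupp] with t ht
      by_cases h : t ∈ Icc a b
      · simp [h, G]
      · simp [h, ht h]
    · exact Integrable.indicator (hf.add ((h_integ _ hBc).const_mul _)) measurableSet_Icc
    · exact Integrable.indicator (h_integ _ hBc) measurableSet_Icc
  · refine le_trans ?_ hgood
    refine mul_le_mul_of_nonneg_left ?_ (by positivity)
    refine integral_mono_of_nonneg (Filter.Eventually.of_forall fun t => by positivity) ?_
      (Filter.Eventually.of_forall fun t => ?_)
    · exact (memLp_two_iff_integrable_sq_norm hG2.1).1 hG2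
    · dsimp only
      gcongr
      exact norm_indicator_le_norm_self _ _
  · rw [Summable.tsum_finsetSum fun _ _ => ENNReal.summable]
    refine (Finset.sum_le_sum fun q hq => Ew_sum q.1 q.2 (hBs q hq).1).trans ?_
    rw [← ENNReal.ofReal_sum_of_nonneg (fun _ _ => by positivity), ← Finset.mul_sum]
    apply ENNReal.ofReal_le_ofReal
    linarith
  · intro n hn
    have h1 : ∀ q ∈ Bs, Ew q.1 q.2 n < 1 := fun q hq =>
      lt_of_le_of_lt (Finset.single_le_sum (f := fun q : ℤ × ℕ => Ew q.1 q.2 n)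
        (fun _ _ => zero_le) hq) hn
    calc 2 * ‖∑ q ∈ Bs, ∑ k ∈ I q, β q k * Dk a b (n - k)‖ₑ
        ≤ 2 * ∑ q ∈ Bs, ‖∑ k ∈ I q, β q k * Dk a b (n - k)‖ₑ := by
          gcongr; exact enorm_sum_le _ _
      _ = ∑ q ∈ Bs, 2 * ‖∑ k ∈ I q, β q k * Dk a b (n - k)‖ₑ := Finset.mul_sum _ _ _
      _ ≤ ∑ q ∈ Bs, ENNReal.ofReal lam * Ew q.1 q.2 n := Finset.sum_le_sum fun q hq =>
          bad_piece (β q) a b lam hlam q.1 q.2 (hβa q) (hβb q) (hβsum q hq) n (h1 q hq)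
      _ = _ := (Finset.mul_sum _ _ _).symm

end RdF

namespace RdF

lemma weak {N : ℕ} (a b : Fin N → ℝ) (f : Fin N → ℝ → ℂ) (hab : ∀ ν, a ν ≤ b ν)
    (hsub : ∀ ν, Icc (a ν) (b ν) ⊆ Ico 0 (2 * π))
    (hdis : ∀ ν μ, ν ≠ μ → Disjoint (Icc (a ν) (b ν)) (Icc (a μ) (b μ)))
    (hf : ∀ ν, IntegrableOn (f ν) (Ioc 0 (2 * π)))
    (hsupp : ∀ ν, ∀ᵐ t ∂(volume.restrict (Ioc 0 (2 * π))), t ∉ Icc (a ν) (b ν) → f ν t = 0)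
    (hg : ∀ ν, Summable fun k => ‖fourierCoef (f ν) k‖ ^ 2) {lam : ℝ} (hlam : 0 < lam) :
    ∑' n : ℤ, (if lam < ‖fourierCoef (fun t => ∑ ν, f ν t) n‖ then (1 : ℝ≥0∞) else 0) ≤
      ENNReal.ofReal 4010000 *
        ∑ ν, ∑' k : ℤ, ENNReal.ofReal (Phi lam (fourierCoef (f ν) k)) := by
  classical
  choose h w E hh2 hhs hhw hhL hE hEw using
    fun ν => one_nu (hf ν) (hab ν) (hsub ν) (hsupp ν) (hg ν) hlam
  set P : Fin N → ℝ := fun ν => ∑' k, Phi lam (fourierCoef (f ν) k) with hPdef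
  have hP0 : ∀ ν, 0 ≤ P ν := fun ν => tsum_nonneg fun _ => Phi_nonneg hlam _
  have hPe : ∀ ν, ∑' k : ℤ, ENNReal.ofReal (Phi lam (fourierCoef (f ν) k)) =
      ENNReal.ofReal (P ν) := fun ν =>
    (ENNReal.ofReal_tsum_of_nonneg (fun _ => Phi_nonneg hlam _) (Phi_summable hlam (hg ν))).symm
  have hh_integ : ∀ ν, IntegrableOn (h ν) (Ioc 0 (2 * π)) := fun ν =>
    (hh2 ν).integrable (by norm_num)
  let H : ℝ → ℂ := fun t => ∑ ν, h ν t
  have hH2 : MemLp H 2 (volume.restrict (Ioc 0 (2 * π))) :=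
    memLp_finsetSum _ fun ν _ => hh2 ν
  have hHcoef : ∀ n, fourierCoef H n = ∑ ν, fourierCoef (h ν) n := fun n =>
    coef_sum Finset.univ h (fun ν _ => hh_integ ν) n
  have hFcoef : ∀ n, fourierCoef (fun t => ∑ ν, f ν t) n = fourierCoef H n + ∑ ν, w ν n := by
    intro n
    rw [coef_sum Finset.univ f (fun ν _ => hf ν) n, hHcoef, ← Finset.sum_add_distrib]
    exact Finset.sum_congr rfl fun ν _ => hhw ν n
  have hpar := parseval hH2
  have hsq : ∀ t, ‖H t‖ ^ 2 = ∑ ν, ‖h ν t‖ ^ 2 := by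
    intro t
    by_cases ht : ∃ ν, t ∈ Icc (a ν) (b ν)
    · obtain ⟨ν, hν⟩ := ht
      have h0 : ∀ μ, μ ≠ ν → h μ t = 0 := fun μ hμ =>
        hhs μ t fun hm => (Set.disjoint_left.1 (hdis μ ν hμ)) hm hν
      have h1 : H t = h ν t := Finset.sum_eq_single_of_mem ν (Finset.mem_univ _)
        fun μ _ hμ => h0 μ hμ
      rw [h1]
      exact (Finset.sum_eq_single_of_mem (f := fun μ => ‖h μ t‖ ^ 2) ν (Finset.mem_univ _)
        fun μ _ hμ => by simp [h0 μ hμ]).symm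
    · push Not at ht
      have h0 : ∀ μ, h μ t = 0 := fun μ => hhs μ t (ht μ)
      simp [H, h0]
  have hL : (2 * π)⁻¹ * ∫ t in Ioc 0 (2 * π), ‖H t‖ ^ 2 ≤ 1000000 * lam ^ 2 * ∑ ν, P ν := by
    simp only [hsq]
    rw [integral_finsetSum _ fun ν _ => (memLp_two_iff_integrable_sq_norm (hh2 ν).1).1 (hh2 ν),
      Finset.mul_sum, Finset.mul_sum]
    exact Finset.sum_le_sum fun ν _ => hhL ν
  have hpt : ∀ n : ℤ, (if lam < ‖fourierCoef (fun t => ∑ ν, f ν t) n‖ then (1 : ℝ≥0∞) else 0) ≤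
      ∑ ν, E ν n + ENNReal.ofReal (4 / lam ^ 2 * ‖fourierCoef H n‖ ^ 2) := by
    intro n
    split_ifs with hn
    swap
    · exact zero_le
    by_cases hS : ∑ ν, E ν n < 1
    swap
    · exact le_add_right (not_lt.1 hS)
    refine le_add_left ?_
    have h1 : ∀ ν, E ν n < 1 := fun ν =>
      lt_of_le_of_lt (Finset.single_le_sum (f := fun ν => E ν n)
        (fun _ _ => zero_le) (Finset.mem_univ ν)) hS
    have h2 : 2 * ‖∑ ν, w ν n‖ₑ ≤ ENNReal.ofReal lam := by
      calc 2 * ‖∑ ν, w ν n‖ₑ ≤ 2 * ∑ ν, ‖w ν n‖ₑ := by gcongr; exact enorm_sum_le _ _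
        _ = ∑ ν, 2 * ‖w ν n‖ₑ := Finset.mul_sum _ _ _
        _ ≤ ∑ ν, ENNReal.ofReal lam * E ν n := Finset.sum_le_sum fun ν _ => hEw ν n (h1 ν)
        _ = ENNReal.ofReal lam * ∑ ν, E ν n := (Finset.mul_sum _ _ _).symm
        _ ≤ ENNReal.ofReal lam * 1 := by gcongr
        _ = _ := mul_one _
    have h3 : 2 * ‖∑ ν, w ν n‖ ≤ lam := by
      rw [← ofReal_norm, ← ENNReal.ofReal_ofNat, ← ENNReal.ofReal_mul (by norm_num)] at h2
      exact (ENNReal.ofReal_le_ofReal_iff hlam.le).1 h2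
    rw [hFcoef] at hn
    have h4 := norm_add_le (fourierCoef H n) (∑ ν, w ν n)
    have h5 : lam / 2 ≤ ‖fourierCoef H n‖ := by linarith
    rw [← ENNReal.ofReal_one]
    apply ENNReal.ofReal_le_ofReal
    rw [div_mul_eq_mul_div, le_div_iff₀ (by positivity)]
    nlinarith
  have hsumH : ∑' n : ℤ, ENNReal.ofReal (4 / lam ^ 2 * ‖fourierCoef H n‖ ^ 2) ≤
      ENNReal.ofReal (4000000 * ∑ ν, P ν) := by
    have h1 := hpar.mul_left (4 / lam ^ 2)
    rw [← ENNReal.ofReal_tsum_of_nonneg (fun _ => by positivity) h1.summable, h1.tsum_eq]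
    apply ENNReal.ofReal_le_ofReal
    calc _ ≤ 4 / lam ^ 2 * (1000000 * lam ^ 2 * ∑ ν, P ν) := by gcongr
      _ = _ := by field_simp; ring
  have hsumE : ∑' n, ∑ ν, E ν n ≤ ENNReal.ofReal (10000 * ∑ ν, P ν) := by
    rw [Summable.tsum_finsetSum fun _ _ => ENNReal.summable, Finset.mul_sum,
      ENNReal.ofReal_sum_of_nonneg fun ν _ => mul_nonneg (by norm_num) (hP0 ν)]
    exact Finset.sum_le_sum fun ν _ => hE ν
  have hPs : 0 ≤ ∑ ν, P ν := Finset.sum_nonneg fun ν _ => hP0 ν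
  refine (ENNReal.tsum_le_tsum hpt).trans ?_
  rw [ENNReal.tsum_add]
  refine (add_le_add hsumE hsumH).trans ?_
  simp only [hPe]
  rw [← ENNReal.ofReal_sum_of_nonneg fun ν _ => hP0 ν, ← ENNReal.ofReal_mul (by norm_num),
    ← ENNReal.ofReal_add (by positivity) (by positivity)]
  apply ENNReal.ofReal_le_ofReal
  linarith

lemma layer {p : ℝ} (hp : 0 < p) (y : ℂ) :
    ‖y‖ₑ ^ p ≤ ∑' j : ℤ, ENNReal.ofReal (((2 : ℝ) ^ (j + 1)) ^ p) *
      (if (2 : ℝ) ^ j < ‖y‖ then (1 : ℝ≥0∞) else 0) := by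
  by_cases hy : y = 0
  · simp [hy, hp]
  obtain ⟨m, hm1, hm2⟩ := exists_mem_Ioc_zpow (norm_pos_iff.2 hy) (one_lt_two (α := ℝ))
  refine le_trans ?_ (ENNReal.le_tsum m)
  rw [if_pos hm1, mul_one, ← ofReal_norm, ENNReal.ofReal_rpow_of_nonneg (norm_nonneg _) hp.le]
  apply ENNReal.ofReal_le_ofReal
  gcongr

/-- The dyadic weights of the scale sum. -/
noncomputable def kap (p : ℝ) (i : ℤ) : ℝ :=
  ((2 : ℝ) ^ (i + 1)) ^ p * min (2 * (2 : ℝ) ^ (-i)) ((2 * (2 : ℝ) ^ (-i)) ^ 2)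

lemma kap_nonneg (p : ℝ) (i : ℤ) : 0 ≤ kap p i := by rw [kap]; positivity

lemma kap_summable {p : ℝ} (hp1 : 1 < p) (hp2 : p < 2) : Summable (kap p) := by
  have e1 : ∀ n : ℕ, ((2 : ℝ) ^ n) ^ p = ((2 : ℝ) ^ p) ^ n := fun n => by
    rw [← Real.rpow_natCast, ← Real.rpow_natCast, ← Real.rpow_mul (by norm_num),
      ← Real.rpow_mul (by norm_num), mul_comm]
  have h2p : (2 : ℝ) < 2 ^ p := by
    calc (2 : ℝ) = 2 ^ (1 : ℝ) := by simp
      _ < _ := Real.rpow_lt_rpow_of_exponent_lt (by norm_num) hp1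
  have h4p : (2 : ℝ) ^ p < 4 := by
    calc (2 : ℝ) ^ p < 2 ^ (2 : ℝ) := Real.rpow_lt_rpow_of_exponent_lt (by norm_num) hp2
      _ = 4 := by norm_num
  refine Summable.of_nat_of_neg ?_ ?_
  · refine Summable.of_nonneg_of_le (fun n => kap_nonneg p _)
      (f := fun n : ℕ => (2 ^ p * 4) * ((2 : ℝ) ^ p / 4) ^ n) (fun n => ?_) ?_
    · rw [kap]
      refine (mul_le_mul_of_nonneg_left (min_le_right _ _) (by positivity)).trans ?_
      rw [zpow_add₀ (by norm_num), zpow_one, Real.mul_rpow (by positivity) (by positivity),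
        zpow_neg, zpow_natCast, e1, div_pow, mul_pow, inv_pow, ← pow_mul, mul_comm n 2, pow_mul]
      apply le_of_eq
      norm_num
      field_simp
    · exact (summable_geometric_of_lt_one (by positivity) (by linarith)).mul_left _
  · refine Summable.of_nonneg_of_le (fun n => kap_nonneg p _)
      (f := fun n : ℕ => (2 ^ p * 2) * (2 / (2 : ℝ) ^ p) ^ n) (fun n => ?_) ?_
    · rw [kap]
      refine (mul_le_mul_of_nonneg_left (min_le_left _ _) (by positivity)).trans ?_
      rw [zpow_add₀ (by norm_num), zpow_one, Real.mul_rpow (by positivity) (by positivity),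
        neg_neg, zpow_neg, zpow_natCast, Real.inv_rpow (by positivity), e1, div_pow]
      apply le_of_eq
      field_simp
    · refine (summable_geometric_of_lt_one (by positivity) ?_).mul_left _
      rw [div_lt_one (by positivity)]
      exact h2p

lemma scale_sum {p : ℝ} (hp1 : 1 < p) (hp2 : p < 2) (x : ℂ) :
    ∑' j : ℤ, ENNReal.ofReal (((2 : ℝ) ^ (j + 1)) ^ p) * ENNReal.ofReal (Phi ((2 : ℝ) ^ j) x) ≤
      ENNReal.ofReal (∑' i, kap p i) * ‖x‖ₑ ^ p := by
  by_cases hx : x = 0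
  · simp [hx, Phi]
  obtain ⟨m, hm1, hm2⟩ := exists_mem_Ioc_zpow (norm_pos_iff.2 hx) (one_lt_two (α := ℝ))
  rw [← (Equiv.addLeft m).tsum_eq, ENNReal.ofReal_tsum_of_nonneg (kap_nonneg p)
    (kap_summable hp1 hp2), ← ENNReal.tsum_mul_right]
  refine ENNReal.tsum_le_tsum fun i => ?_
  rw [← ofReal_norm, ENNReal.ofReal_rpow_of_nonneg (norm_nonneg _) (by linarith),
    ← ENNReal.ofReal_mul (by positivity), ← ENNReal.ofReal_mul (kap_nonneg _ _)]
  apply ENNReal.ofReal_le_ofReal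
  rw [Equiv.coe_addLeft]
  have ht : ‖x‖ / (2 : ℝ) ^ (m + i) ≤ 2 * (2 : ℝ) ^ (-i) := by
    rw [div_le_iff₀ (by positivity)]
    refine hm2.trans (le_of_eq ?_)
    rw [zpow_add₀ (by norm_num), zpow_add₀ (by norm_num), zpow_neg]
    field_simp
  have hPhi : Phi ((2 : ℝ) ^ (m + i)) x ≤
      min (2 * (2 : ℝ) ^ (-i)) ((2 * (2 : ℝ) ^ (-i)) ^ 2) := by
    rw [Phi]
    have h0 : 0 ≤ ‖x‖ / (2 : ℝ) ^ (m + i) := by positivity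
    exact min_le_min ht (by gcongr)
  have hw : ((2 : ℝ) ^ (m + i + 1)) ^ p ≤ ((2 : ℝ) ^ (i + 1)) ^ p * ‖x‖ ^ p := by
    rw [← Real.mul_rpow (by positivity) (by positivity)]
    apply Real.rpow_le_rpow (by positivity) _ (by linarith)
    rw [add_assoc, zpow_add₀ (by norm_num), mul_comm]
    gcongr
  calc _ ≤ (((2 : ℝ) ^ (i + 1)) ^ p * ‖x‖ ^ p) *
        min (2 * (2 : ℝ) ^ (-i)) ((2 * (2 : ℝ) ^ (-i)) ^ 2) := by
        gcongr
        exact Phi_nonneg (by positivity) _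
    _ = _ := by rw [kap]; ring

lemma sq_summable {p : ℝ} (hp1 : 1 < p) (hp2 : p < 2) {g : ℤ → ℂ}
    (hg : ∑' k, ‖g k‖ₑ ^ p ≠ ⊤) : Summable fun k => ‖g k‖ ^ 2 := by
  have h1 : Summable fun k => ‖g k‖ ^ p := by
    have := ENNReal.summable_toReal hg
    refine this.congr fun k => ?_
    rw [← ENNReal.toReal_rpow, toReal_enorm]
  refine Summable.of_norm_bounded_eventually h1 ?_
  have h2 := h1.tendsto_cofinite_zero.eventually (gt_mem_nhds (zero_lt_one))
  filter_upwards [h2] with k hk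
  rw [norm_pow, norm_norm, ← Real.rpow_natCast]
  have h3 : ‖g k‖ ≤ 1 := by
    by_contra hc
    push Not at hc
    exact absurd hk (not_lt.2 (Real.one_le_rpow hc.le (by linarith)))
  rcases (norm_nonneg (g k)).eq_or_lt with h0 | h0
  · rw [← h0, Real.zero_rpow (by norm_num), Real.zero_rpow (by linarith)]
  · exact Real.rpow_le_rpow_of_exponent_ge h0 h3 (by push_cast; linarith)

lemma ApNorm_rpow {p : ℝ} (hp : 0 < p) (f : ℝ → ℂ) :
    ApNorm p f ^ p = ∑' k : ℤ, ‖fourierCoef f k‖ₑ ^ p := by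
  rw [ApNorm, ← ENNReal.rpow_mul, one_div_mul_cancel hp.ne', ENNReal.rpow_one]
  rfl

lemma strong {p : ℝ} (hp1 : 1 < p) (hp2 : p < 2)
    {N : ℕ} (a b : Fin N → ℝ) (f : Fin N → ℝ → ℂ) (hab : ∀ ν, a ν ≤ b ν)
    (hsub : ∀ ν, Icc (a ν) (b ν) ⊆ Ico 0 (2 * π))
    (hdis : ∀ ν μ, ν ≠ μ → Disjoint (Icc (a ν) (b ν)) (Icc (a μ) (b μ)))
    (hf : ∀ ν, IntegrableOn (f ν) (Ioc 0 (2 * π)))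
    (hsupp : ∀ ν, ∀ᵐ t ∂(volume.restrict (Ioc 0 (2 * π))), t ∉ Icc (a ν) (b ν) → f ν t = 0)
    (hg : ∀ ν, Summable fun k => ‖fourierCoef (f ν) k‖ ^ 2) :
    ∑' n : ℤ, ‖fourierCoef (fun t => ∑ ν, f ν t) n‖ₑ ^ p ≤
      ENNReal.ofReal (4010000 * ∑' i, kap p i) *
        ∑ ν, ∑' k : ℤ, ‖fourierCoef (f ν) k‖ₑ ^ p := by
  set W : ℤ → ℝ≥0∞ := fun j => ENNReal.ofReal (((2 : ℝ) ^ (j + 1)) ^ p) with hW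
  set C := ENNReal.ofReal 4010000 with hC
  calc _ ≤ ∑' n : ℤ, ∑' j : ℤ, W j *
        (if (2 : ℝ) ^ j < ‖fourierCoef (fun t => ∑ ν, f ν t) n‖ then (1 : ℝ≥0∞) else 0) :=
        ENNReal.tsum_le_tsum fun n => layer (by linarith) _
    _ = ∑' j : ℤ, W j * ∑' n : ℤ,
        (if (2 : ℝ) ^ j < ‖fourierCoef (fun t => ∑ ν, f ν t) n‖ then (1 : ℝ≥0∞) else 0) := by
        rw [ENNReal.tsum_comm]
        simp only [ENNReal.tsum_mul_left]
    _ ≤ ∑' j : ℤ, W j * (C *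
        ∑ ν, ∑' k : ℤ, ENNReal.ofReal (Phi ((2 : ℝ) ^ j) (fourierCoef (f ν) k))) := by
        refine ENNReal.tsum_le_tsum fun j => ?_
        gcongr
        exact weak a b f hab hsub hdis hf hsupp hg (by positivity)
    _ = C * ∑' j : ℤ, ∑ ν, ∑' k : ℤ, W j *
          ENNReal.ofReal (Phi ((2 : ℝ) ^ j) (fourierCoef (f ν) k)) := by
        rw [← ENNReal.tsum_mul_left]
        refine tsum_congr fun j => ?_
        rw [mul_left_comm, Finset.mul_sum]
        simp only [ENNReal.tsum_mul_left]
    _ = C * ∑ ν, ∑' k : ℤ, ∑' j : ℤ, W j *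
          ENNReal.ofReal (Phi ((2 : ℝ) ^ j) (fourierCoef (f ν) k)) := by
        rw [Summable.tsum_finsetSum fun _ _ => ENNReal.summable]
        congr 1
        refine Finset.sum_congr rfl fun ν _ => ?_
        rw [ENNReal.tsum_comm]
    _ ≤ C * ∑ ν, ∑' k : ℤ, ENNReal.ofReal (∑' i, kap p i) * ‖fourierCoef (f ν) k‖ₑ ^ p := by
        gcongr
        exact scale_sum hp1 hp2 _
    _ = _ := by
        rw [hC, ENNReal.ofReal_mul (by norm_num), mul_assoc]
        simp only [ENNReal.tsum_mul_left]
        rw [← Finset.mul_sum]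

end RdF

/-- Lemma 6, consequence of the Rubio de Francia inequality:
for pairwise-disjoint intervals Δ_ν ⊂ 𝕋 and f_ν ∈ A_p(𝕋) with supp f_ν ⊆ Δ_ν,
‖Σ f_ν‖_{A_p}^p ≤ c_p·Σ ‖f_ν‖_{A_p}^p. -/
theorem statement11
    (p : ℝ) (hp1 : 1 < p) (hp2 : p < 2) :
    ∃ c : ℝ, 0 < c ∧
      ∀ (N : ℕ) (a b : Fin N → ℝ) (f : Fin N → ℝ → ℂ),
        (∀ ν, a ν ≤ b ν) →
        (∀ ν, Icc (a ν) (b ν) ⊆ Ico 0 (2 * Real.pi)) →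
        (∀ ν μ, ν ≠ μ → Disjoint (Icc (a ν) (b ν)) (Icc (a μ) (b μ))) →
        (∀ ν, Function.Periodic (f ν) (2 * Real.pi)) →
        (∀ ν, IntervalIntegrable (f ν) volume 0 (2 * Real.pi)) →
        -- supp f_ν ⊆ Δ_ν : f_ν vanishes a.e. outside Δ_ν (within a period)
        (∀ ν, ∀ᵐ t ∂(volume.restrict (Ico 0 (2 * Real.pi))),
          t ∉ Icc (a ν) (b ν) → f ν t = 0) →
        (∀ ν, ApNorm p (f ν) ≠ ⊤) →
        ApNorm p (fun t => ∑ ν, f ν t) ^ p ≤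
          ENNReal.ofReal c * ∑ ν, ApNorm p (f ν) ^ p := by
  have hK : 0 ≤ ∑' i, RdF.kap p i := tsum_nonneg fun i => RdF.kap_nonneg p i
  refine ⟨4010000 * ∑' i, RdF.kap p i + 1, by positivity, ?_⟩
  intro N a b f hab hsub hdis _ h_integ hsupp hAp
  have hp0 : 0 < p := by linarith
  have hf : ∀ ν, IntegrableOn (f ν) (Ioc 0 (2 * π)) := fun ν =>
    (intervalIntegrable_iff_integrableOn_Ioc_of_le (by positivity)).1 (h_integ ν)
  have hsupp' : ∀ ν, ∀ᵐ t ∂(volume.restrict (Ioc 0 (2 * π))),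
      t ∉ Icc (a ν) (b ν) → f ν t = 0 := by
    intro ν
    rw [← Measure.restrict_congr_set (Ico_ae_eq_Ioc (μ := volume) (a := (0 : ℝ)) (b := 2 * π))]
    exact hsupp ν
  have hg : ∀ ν, Summable fun k => ‖fourierCoef (f ν) k‖ ^ 2 := by
    intro ν
    refine RdF.sq_summable hp1 hp2 ?_
    rw [← RdF.ApNorm_rpow hp0]
    exact ENNReal.rpow_ne_top_of_nonneg hp0.le (hAp ν)
  simp only [RdF.ApNorm_rpow hp0]
  refine (RdF.strong hp1 hp2 a b f hab hsub hdis hf hsupp' hg).trans ?_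
  gcongr
  linarith
end

section
/- Let 1 < p < 2. Let ρ_j > 0, j = 0,1,2,…, satisfy ω(ρ_j) = 2^{-j} with ρ_0 = 2π, where ω is a modulus of continuity with ω(2π) = 1 and ω(2δ) < 2ω(δ) for 0 < δ ≤ 2π. Let E ⊆ [0,2π] be a closed set such that for every j ≥ 0, E is covered by 2^j closed intervals of equal length ρ_j. Then there exists c_p > 0 such that: for every λ ≥ 2 and every real function g on [0,2π] that is linear on each interval complementary to E in [0,2π], one has Σ_{|k| ≤ 2λ} |(e^{ig})^∧(k)|^p ≤ c_p · (Θ_p(λ))^p, where Θ_p(y) = (∫₁^y (χ^{-1}(1/τ))^p dτ)^{1/p} and χ(δ) = δ·ω(δ). The constant c_p is independent of λ and g. -/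
open MeasureTheory Real Set
open scoped ENNReal

open SchwartzMap FourierTransform in
lemma exists_kernel : ∃ κ : ℝ → ℂ, Continuous κ ∧ Integrable κ ∧
    Integrable (fun s => ‖κ s‖ * (|s| + 1)) ∧ ∫ s, κ s = 1 ∧
    ∀ ξ : ℝ, 4 * π ≤ |ξ| → ∫ s, κ s * Complex.exp (-Complex.I * ξ * s) = 0 := by
  let b : ContDiffBump (0:ℝ) := ⟨1, 2, by norm_num, by norm_num⟩
  have hbc : HasCompactSupport (fun x : ℝ => ((b x : ℝ) : ℂ)) :=
    b.hasCompactSupport.comp_left (g := fun x : ℝ => (x : ℂ)) (by simp)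
  have hbs : ContDiff ℝ (⊤ : ℕ∞) (fun x : ℝ => ((b x : ℝ) : ℂ)) :=
    Complex.ofRealCLM.contDiff.comp b.contDiff
  let B : 𝓢(ℝ, ℂ) := hbc.toSchwartzMap hbs
  have hB : ∀ x, B x = ((b x : ℝ) : ℂ) := fun x => rfl
  let κ : 𝓢(ℝ, ℂ) := 𝓕⁻ B
  have hκ : 𝓕 κ = B := by simp [κ]
  have key : ∀ v : ℝ, ∫ s, κ s * Complex.exp (-Complex.I * ((2 * π * v : ℝ):ℂ) * s) = B v := by
    intro v
    rw [← hκ, SchwartzMap.fourier_coe, Real.fourier_real_eq_integral_exp_smul]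
    congr 1
    ext s
    rw [smul_eq_mul, mul_comm]
    congr 2
    push_cast
    ring
  refine ⟨κ, κ.continuous, κ.integrable, ?_, ?_, ?_⟩
  · have h1 := κ.integrable_pow_mul volume 1
    have h2 := (κ.integrable (μ := volume)).norm
    refine (h1.add h2).congr (Filter.Eventually.of_forall fun s => ?_)
    simp
    ring
  · have := key 0
    rw [hB, b.one_of_mem_closedBall (by simp [b])] at this
    simpa using this
  · intro ξ hξ
    have := key (ξ / (2 * π))
    rw [hB, b.zero_of_le_dist] at this
    · have h2 : 2 * π * (ξ / (2 * π)) = ξ := by field_simp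
      rw [h2] at this
      simpa using this
    · simp only [b, dist_zero_right, Real.norm_eq_abs, abs_div]
      rw [abs_of_pos (by positivity : 0 < 2 * π), le_div_iff₀ (by positivity)]
      linarith

noncomputable def tp (A : Finset ℤ) (d : ℤ → ℂ) (t : ℝ) : ℂ :=
  ∑ k ∈ A, d k * Complex.exp (-Complex.I * (k : ℂ) * (t : ℂ))

noncomputable def tq (A : Finset ℤ) (d : ℤ → ℂ) (a b t : ℝ) : ℂ :=
  ∑ k ∈ A, d k * (Complex.exp (Complex.I * b) / (Complex.I * ((a:ℂ) - k))) *
    Complex.exp (Complex.I * ((a:ℂ) - k) * (t : ℂ))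

lemma tp_cont (A : Finset ℤ) (d : ℤ → ℂ) : Continuous (tp A d) := by
  unfold tp; fun_prop

lemma tq_cont (A : Finset ℤ) (d : ℤ → ℂ) (a b : ℝ) : Continuous (tq A d a b) := by
  unfold tq; fun_prop

lemma tq_deriv (A : Finset ℤ) (d : ℤ → ℂ) (a b : ℝ) (h : ∀ k ∈ A, a ≠ k) (t : ℝ) :
    HasDerivAt (tq A d a b) (Complex.exp (Complex.I * ((a * t + b : ℝ) : ℂ)) * tp A d t) t := by
  unfold tq tp
  rw [Finset.mul_sum]
  refine HasDerivAt.fun_sum fun k hk => ?_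
  have h1 : HasDerivAt (fun t : ℝ => Complex.I * ((a:ℂ) - k) * (t : ℂ))
      (Complex.I * ((a:ℂ) - k) * 1) t :=
    (Complex.ofRealCLM.hasDerivAt (x := t)).const_mul _
  have h2 := (h1.cexp).const_mul (d k * (Complex.exp (Complex.I * b) / (Complex.I * ((a:ℂ) - k))))
  refine h2.congr_deriv ?_
  have h3 : (a:ℂ) - k ≠ 0 := by
    rw [sub_ne_zero]
    exact_mod_cast h k hk
  have h4 : Complex.exp (Complex.I * ((a * t + b : ℝ) : ℂ)) * (d k * Complex.exp (-Complex.I * k * t))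
     = d k * (Complex.exp (Complex.I * b) * Complex.exp (Complex.I * ((a:ℂ) - k) * t)) := by
    rw [← Complex.exp_add, mul_left_comm, ← Complex.exp_add]
    congr 2
    push_cast
    ring
  rw [h4]
  have := Complex.I_ne_zero
  field_simp

lemma tp_periodic (A : Finset ℤ) (d : ℤ → ℂ) : Function.Periodic (tp A d) (2 * π) := by
  intro t
  unfold tp
  refine Finset.sum_congr rfl fun k _ => ?_
  congr 1
  rw [Complex.exp_eq_exp_iff_exists_int]
  exact ⟨-k, by push_cast; ring⟩

lemma tp_parseval (A : Finset ℤ) (d : ℤ → ℂ) (c : ℝ) :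
    ∫ t in (0:ℝ)..(2 * π), ‖tp A d (t + c)‖ ^ 2 = 2 * π * ∑ k ∈ A, ‖d k‖ ^ 2 := by
  have hper : Function.Periodic (fun t => ‖tp A d t‖ ^ 2) (2 * π) := by
    intro t
    simp only [tp_periodic A d t]
  rw [intervalIntegral.integral_comp_add_right (fun t => ‖tp A d t‖ ^ 2), zero_add, add_comm (2*π) c,
    hper.intervalIntegral_add_eq c 0, zero_add]
  have hC : ∫ t in (0:ℝ)..(2 * π), (((‖tp A d t‖ ^ 2 : ℝ)) : ℂ) =
      ((2 * π * ∑ k ∈ A, ‖d k‖ ^ 2 : ℝ) : ℂ) := by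
    have e1 : ∀ t : ℝ, (((‖tp A d t‖ ^ 2 : ℝ)) : ℂ) = ∑ k ∈ A, ∑ l ∈ A,
        d k * (starRingEnd ℂ) (d l) * Complex.exp (Complex.I * ((l:ℂ) - k) * t) := by
      intro t
      push_cast
      rw [← Complex.mul_conj', tp, map_sum, Finset.sum_mul_sum]
      refine Finset.sum_congr rfl fun k _ => Finset.sum_congr rfl fun l _ => ?_
      rw [map_mul, ← Complex.exp_conj, mul_mul_mul_comm, ← Complex.exp_add]
      congr 2
      simp
      ring
    simp_rw [e1]
    rw [intervalIntegral.integral_finsetSum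
      (fun k _ => Continuous.intervalIntegrable (by fun_prop) _ _)]
    push_cast
    rw [Finset.mul_sum]
    refine Finset.sum_congr rfl fun k hk => ?_
    rw [intervalIntegral.integral_finsetSum
      (fun k _ => Continuous.intervalIntegrable (by fun_prop) _ _)]
    rw [Finset.sum_eq_single k]
    · simp [Complex.mul_conj']
    · intro l _ hlk
      rw [intervalIntegral.integral_const_mul]
      have hne : Complex.I * ((l:ℂ) - k) ≠ 0 := by
        refine mul_ne_zero Complex.I_ne_zero ?_
        rw [sub_ne_zero]
        exact_mod_cast hlk
      rw [integral_exp_mul_complex hne]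
      have : Complex.exp (Complex.I * ((l:ℂ) - k) * ((2 * π : ℝ) : ℂ)) = 1 := by
        rw [Complex.exp_eq_one_iff]
        exact ⟨l - k, by push_cast; ring⟩
      rw [this]
      simp
    · intro h; exact absurd hk h
  have := intervalIntegral.integral_ofReal (μ := volume) (a := 0) (b := 2 * π) (f := fun t => ‖tp A d t‖ ^ 2)
  have h2 := this.symm.trans hC
  exact_mod_cast h2

lemma cells (M : ℕ) (ε : ℝ) (hε : 0 < ε) (hM : M * ε = 2 * π) (v : ℝ → ℝ) (hv : Continuous v)
    (R : Finset ℕ) (hR : R ⊆ Finset.range M) (θ : ℝ) (hθ : 0 < θ) :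
    ∑ i ∈ R, ∫ t in (i * ε : ℝ)..((i * ε : ℝ) + ε), v t ≤
      θ / 2 * (R.card * ε) + 1 / (2 * θ) * ∫ t in (0:ℝ)..(2 * π), v t ^ 2 := by
  have h1 : ∀ i : ℕ, ∫ t in (i * ε : ℝ)..((i * ε : ℝ) + ε), v t ≤
      θ / 2 * ε + 1 / (2 * θ) * ∫ t in (i * ε : ℝ)..((i * ε : ℝ) + ε), v t ^ 2 := by
    intro i
    have : ∫ t in (i * ε : ℝ)..((i * ε : ℝ) + ε), (θ / 2 + 1 / (2 * θ) * v t ^ 2) =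
       θ / 2 * ε + 1 / (2 * θ) * ∫ t in (i * ε : ℝ)..((i * ε : ℝ) + ε), v t ^ 2 := by
      rw [intervalIntegral.integral_add (by simp)
        (Continuous.intervalIntegrable (by fun_prop) _ _), intervalIntegral.integral_const_mul]
      simp only [intervalIntegral.integral_const, smul_eq_mul]
      ring
    rw [← this]
    refine intervalIntegral.integral_mono_on (by linarith) (hv.intervalIntegrable _ _)
      (Continuous.intervalIntegrable (by fun_prop) _ _) fun t _ => ?_
    have : θ / 2 + 1 / (2 * θ) * v t ^ 2 - v t = (θ - v t) ^ 2 / (2 * θ) := by field_simp; ring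
    have h3 : 0 ≤ (θ - v t) ^ 2 / (2 * θ) := by positivity
    linarith
  have h2 : ∑ i ∈ Finset.range M, ∫ t in (i * ε : ℝ)..((i * ε : ℝ) + ε), v t ^ 2 =
      ∫ t in (0:ℝ)..(2 * π), v t ^ 2 := by
    have := intervalIntegral.sum_integral_adjacent_intervals (f := fun t => v t ^ 2)
      (a := fun i : ℕ => (i * ε : ℝ)) (n := M) (μ := volume)
      (fun k _ => Continuous.intervalIntegrable (by fun_prop) _ _)
    rw [hM] at this
    simp only [Nat.cast_zero, zero_mul] at this
    rw [← this]
    refine Finset.sum_congr rfl fun i _ => ?_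
    push_cast
    rw [add_mul, one_mul]
  calc _ ≤ ∑ i ∈ R, (θ / 2 * ε + 1 / (2 * θ) * ∫ t in (i * ε : ℝ)..((i * ε : ℝ) + ε), v t ^ 2) :=
        Finset.sum_le_sum fun i _ => h1 i
    _ = θ / 2 * (R.card * ε) + 1 / (2 * θ) * ∑ i ∈ R, ∫ t in (i * ε : ℝ)..((i * ε : ℝ) + ε), v t ^ 2 := by
        rw [Finset.sum_add_distrib, Finset.mul_sum]; simp; ring
    _ ≤ _ := by
        rw [← h2]
        have := Finset.sum_le_sum_of_subset_of_nonneg (f := fun i : ℕ =>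
          ∫ t in (i * ε : ℝ)..((i * ε : ℝ) + ε), v t ^ 2) hR fun i _ _ => ?_
        · gcongr
        exact intervalIntegral.integral_nonneg (by linarith) fun t _ => by positivity

lemma tq_incr (A : Finset ℤ) (d : ℤ → ℂ) (a b : ℝ) (h : ∀ k ∈ A, a ≠ k) (x y : ℝ) :
    tq A d a b y - tq A d a b x =
      ∫ t in x..y, Complex.exp (Complex.I * ((a * t + b : ℝ) : ℂ)) * tp A d t := by
  rw [intervalIntegral.integral_eq_sub_of_hasDerivAt (fun t _ => tq_deriv A d a b h t)]
  have := tp_cont A d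
  exact Continuous.intervalIntegrable (by fun_prop) _ _

lemma norm_expI (x : ℝ) : ‖Complex.exp (Complex.I * (x : ℂ))‖ = 1 := by
  rw [mul_comm, Complex.norm_exp_ofReal_mul_I]

lemma tq_shift (A : Finset ℤ) (d : ℤ → ℂ) (a b : ℝ) (h : ∀ k ∈ A, a ≠ k) (ε : ℝ) (hε : 0 < ε)
    (x s : ℝ) (n : ℕ) (hn : |s| ≤ n) :
    ‖tq A d a b x - tq A d a b (x - ε * s)‖ ≤
      ∑ r ∈ Finset.range (2 * n), ∫ t in (0:ℝ)..ε, ‖tp A d (t + (x + (r - n) * ε))‖ := by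
  have hc := tp_cont A d
  have hs := abs_le.mp hn
  rw [tq_incr A d a b h]
  have h1 := intervalIntegral.norm_integral_le_integral_norm_uIoc (μ := volume) (a := x - ε * s) (b := x)
    (f := fun t => Complex.exp (Complex.I * ((a * t + b : ℝ) : ℂ)) * tp A d t)
  refine h1.trans ?_
  simp only [norm_mul, norm_expI, one_mul]
  have h2 : ∫ t in Set.uIoc (x - ε * s) x, ‖tp A d t‖ ≤
      ∫ t in Set.Ioc (x - n * ε) (x + n * ε), ‖tp A d t‖ := by
    refine setIntegral_mono_set ?_ ?_ ?_
    · exact (Continuous.integrableOn_Ioc (by fun_prop))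
    · exact Filter.Eventually.of_forall fun t => norm_nonneg _
    · refine Filter.Eventually.of_forall fun t ht => ?_
      have ht' := Set.mem_uIoc.mp ht
      refine Set.mem_Ioc.mpr ?_
      have e1 : ε * s ≤ n * ε := by nlinarith
      have e2 : - (n * ε) ≤ ε * s := by nlinarith
      have e3 : 0 ≤ n * ε := by positivity
      rcases ht' with ⟨h, h'⟩ | ⟨h, h'⟩ <;> constructor <;> linarith
  refine h2.trans (le_of_eq ?_)
  have h3 : x - n * ε ≤ x + n * ε := by
    have : 0 ≤ n * ε := by positivity
    linarith
  rw [← intervalIntegral.integral_of_le h3]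
  have := intervalIntegral.sum_integral_adjacent_intervals (f := fun t => ‖tp A d t‖)
      (a := fun i : ℕ => (x + (i - n) * ε : ℝ)) (n := 2 * n) (μ := volume)
      (fun k _ => Continuous.intervalIntegrable (by fun_prop) _ _)
  have e1 : x - n * ε = x + ((0:ℕ) - n) * ε := by push_cast; ring
  have e2 : x + n * ε = x + ((2 * n : ℕ) - n) * ε := by push_cast; ring
  rw [e1, e2, ← this]
  refine Finset.sum_congr rfl fun r _ => ?_
  rw [intervalIntegral.integral_comp_add_right (fun t => ‖tp A d t‖)]
  congr 1
  · ring
  · push_cast; ring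

lemma tq_bdd (A : Finset ℤ) (d : ℤ → ℂ) (a b : ℝ) : ∃ C, ∀ t, ‖tq A d a b t‖ ≤ C := by
  refine ⟨∑ k ∈ A, ‖d k * (Complex.exp (Complex.I * b) / (Complex.I * ((a:ℂ) - k)))‖, fun t => ?_⟩
  unfold tq
  refine (norm_sum_le _ _).trans (Finset.sum_le_sum fun k _ => ?_)
  rw [norm_mul]
  have : ‖Complex.exp (Complex.I * ((a:ℂ) - k) * t)‖ = 1 := by
    have := norm_expI ((a - k) * t)
    push_cast at this
    rwa [← mul_assoc] at this
  rw [this, mul_one]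

lemma tq_repr (κ : ℝ → ℂ) (hκi : Integrable κ) (hκ1 : ∫ s, κ s = 1)
    (hκ0 : ∀ ξ : ℝ, 4 * π ≤ |ξ| → ∫ s, κ s * Complex.exp (-Complex.I * ξ * s) = 0)
    (A : Finset ℤ) (d : ℤ → ℂ) (a b : ℝ) (ε : ℝ) (hε : 0 < ε)
    (far : ∀ k ∈ A, 4 * π / ε ≤ |a - k|) (x : ℝ) :
    tq A d a b x = ∫ s, κ s * (tq A d a b x - tq A d a b (x - ε * s)) := by
  have hInt : ∀ ξ : ℝ, Integrable (fun s => κ s * Complex.exp (-Complex.I * ξ * s)) := by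
    intro ξ
    refine hκi.mul_bdd (c := 1) (Continuous.aestronglyMeasurable (by fun_prop)) ?_
    refine Filter.Eventually.of_forall fun s => ?_
    have := norm_expI (-(ξ * s))
    push_cast at this
    rw [show -Complex.I * ξ * s = Complex.I * -(ξ * s : ℂ) by ring, this]
  have e : ∀ s : ℝ, κ s * tq A d a b (x - ε * s) = ∑ k ∈ A,
      (d k * (Complex.exp (Complex.I * b) / (Complex.I * ((a:ℂ) - k))) *
      Complex.exp (Complex.I * ((a:ℂ) - k) * x)) *
      (κ s * Complex.exp (-Complex.I * (((a - k) * ε : ℝ) : ℂ) * s)) := by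
    intro s
    unfold tq
    rw [Finset.mul_sum]
    refine Finset.sum_congr rfl fun k _ => ?_
    have : Complex.exp (Complex.I * ((a:ℂ) - k) * ((x - ε * s : ℝ) : ℂ)) =
       Complex.exp (Complex.I * ((a:ℂ) - k) * x) * Complex.exp (-Complex.I * (((a - k) * ε : ℝ) : ℂ) * s) := by
      rw [← Complex.exp_add]
      congr 1
      push_cast
      ring
    rw [this]
    ring
  have z : ∫ s, κ s * tq A d a b (x - ε * s) = 0 := by
    simp_rw [e]
    rw [integral_finsetSum _ (fun k _ => (hInt _).const_mul _)]
    refine Finset.sum_eq_zero fun k hk => ?_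
    rw [integral_const_mul, hκ0, mul_zero]
    rw [abs_mul, abs_of_pos hε]
    exact (div_le_iff₀ hε).mp (far k hk)
  have i2 : Integrable fun s => κ s * tq A d a b (x - ε * s) := by
    simp_rw [e]
    exact integrable_finsetSum _ (fun k _ => (hInt _).const_mul _)
  simp_rw [mul_sub]
  rw [integral_sub (hκi.mul_const _) i2, z, integral_mul_const, hκ1]
  simp

lemma sumQ (κ : ℝ → ℂ) (hκi : Integrable κ)
    (hκm : Integrable (fun s => ‖κ s‖ * (|s| + 1))) (hκ1 : ∫ s, κ s = 1)
    (hκ0 : ∀ ξ : ℝ, 4 * π ≤ |ξ| → ∫ s, κ s * Complex.exp (-Complex.I * ξ * s) = 0)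
    (A : Finset ℤ) (d : ℤ → ℂ) (a b : ℕ → ℝ)
    (M : ℕ) (ε : ℝ) (hε : 0 < ε) (hM : M * ε = 2 * π)
    (R : Finset ℕ) (hR : R ⊆ Finset.range M) (far : ∀ i ∈ R, ∀ k ∈ A, 4 * π / ε ≤ |a i - k|)
    (c θ : ℝ) (hθ : 0 < θ) :
    ∑ i ∈ R, ‖tq A d (a i) (b i) (i * ε + c)‖ ≤ 2 * (∫ s, ‖κ s‖ * (|s| + 1)) *
      (θ / 2 * (R.card * ε) + 1 / (2 * θ) * (2 * π * ∑ k ∈ A, ‖d k‖ ^ 2)) := by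
  have hc := tp_cont A d
  have hne : ∀ i ∈ R, ∀ k ∈ A, a i ≠ k := by
    intro i hi k hk h
    have := far i hi k hk
    rw [h, sub_self, abs_zero] at this
    have h2 : 0 < 4 * π / ε := by positivity
    linarith
  set W := θ / 2 * (R.card * ε) + 1 / (2 * θ) * (2 * π * ∑ k ∈ A, ‖d k‖ ^ 2) with hW
  have hW0 : 0 ≤ W := by positivity
  have hs : ∀ s : ℝ, ∑ i ∈ R, ‖tq A d (a i) (b i) (i * ε + c) - tq A d (a i) (b i) (i * ε + c - ε * s)‖
      ≤ 2 * (|s| + 1) * W := by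
    intro s
    set n := ⌈|s|⌉₊
    have hn : |s| ≤ n := Nat.le_ceil _
    have hn' : (n:ℝ) ≤ |s| + 1 := (Nat.ceil_lt_add_one (abs_nonneg s)).le
    calc _ ≤ ∑ i ∈ R, ∑ r ∈ Finset.range (2 * n), ∫ t in (0:ℝ)..ε, ‖tp A d (t + (i * ε + c + (r - n) * ε))‖ :=
          Finset.sum_le_sum fun i hi => tq_shift A d (a i) (b i) (hne i hi) ε hε _ s n hn
      _ = ∑ r ∈ Finset.range (2 * n), ∑ i ∈ R, ∫ t in (0:ℝ)..ε, ‖tp A d (t + (i * ε + c + (r - n) * ε))‖ :=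
          Finset.sum_comm
      _ ≤ ∑ r ∈ Finset.range (2 * n), W := by
          refine Finset.sum_le_sum fun r _ => ?_
          have := cells M ε hε hM (fun t => ‖tp A d (t + (c + (r - n) * ε))‖) (by fun_prop) R hR θ hθ
          rw [tp_parseval] at this
          refine le_trans (le_of_eq ?_) this
          refine Finset.sum_congr rfl fun i _ => ?_
          rw [intervalIntegral.integral_comp_add_right (fun t => ‖tp A d t‖),
            intervalIntegral.integral_comp_add_right (fun t => ‖tp A d t‖)]
          congr 1 <;> ring
      _ ≤ _ := by
          simp only [Finset.sum_const, Finset.card_range, nsmul_eq_mul]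
          push_cast
          gcongr
  have hcq : ∀ i, Continuous (tq A d (a i) (b i)) := fun i => tq_cont A d (a i) (b i)
  have hi : ∀ i ∈ R, Integrable fun s : ℝ =>
      ‖κ s * (tq A d (a i) (b i) (i * ε + c) - tq A d (a i) (b i) (i * ε + c - ε * s))‖ := by
    intro i _
    obtain ⟨C, hC⟩ := tq_bdd A d (a i) (b i)
    refine (hκi.mul_bdd (c := C + C) ?_ ?_).norm
    · have := hcq i
      exact Continuous.aestronglyMeasurable (by fun_prop)
    · exact Filter.Eventually.of_forall fun s => (norm_sub_le _ _).trans (add_le_add (hC _) (hC _))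
  calc _ ≤ ∑ i ∈ R, ∫ s, ‖κ s * (tq A d (a i) (b i) (i * ε + c) - tq A d (a i) (b i) (i * ε + c - ε * s))‖ := by
        refine Finset.sum_le_sum fun i hi => ?_
        conv_lhs => rw [tq_repr κ hκi hκ1 hκ0 A d (a i) (b i) ε hε (far i hi)]
        exact norm_integral_le_integral_norm _
    _ = ∫ s, ∑ i ∈ R, ‖κ s * (tq A d (a i) (b i) (i * ε + c) - tq A d (a i) (b i) (i * ε + c - ε * s))‖ :=
        (integral_finsetSum _ hi).symm
    _ ≤ ∫ s, (2 * W) * (‖κ s‖ * (|s| + 1)) := by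
        refine integral_mono (integrable_finsetSum _ hi) (hκm.const_mul _) fun s => ?_
        simp only [norm_mul]
        rw [← Finset.mul_sum]
        calc _ ≤ ‖κ s‖ * (2 * (|s| + 1) * W) := by gcongr; exact hs s
          _ = _ := by ring
    _ = _ := by rw [integral_const_mul]; ring

lemma telescope (G : Finset ℕ) (u v : ℕ → ℂ) (h : ∀ i ∈ G, i + 1 ∈ G → u i = v (i + 1)) :
    ∑ i ∈ G, (u i - v i) = ∑ i ∈ G with i + 1 ∉ G, u i -
      ∑ i ∈ G with ¬ (i ≠ 0 ∧ i - 1 ∈ G), v i := by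
  rw [Finset.sum_sub_distrib, ← Finset.sum_filter_add_sum_filter_not G (fun i => i + 1 ∈ G) u,
    ← Finset.sum_filter_add_sum_filter_not G (fun i => i ≠ 0 ∧ i - 1 ∈ G) v]
  have : ∑ i ∈ G with i + 1 ∈ G, u i = ∑ i ∈ G with (i ≠ 0 ∧ i - 1 ∈ G), v i := by
    refine Finset.sum_bij (fun i _ => i + 1) ?_ ?_ ?_ ?_
    · intro i hi
      simp only [Finset.mem_filter] at hi ⊢
      simpa using hi.symm
    · intro i _ j _ hij
      simpa using hij
    · intro j hj
      simp only [Finset.mem_filter] at hj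
      obtain ⟨h1, h2, h3⟩ := hj
      have e : j - 1 + 1 = j := Nat.sub_add_cancel (Nat.one_le_iff_ne_zero.mpr h2)
      exact ⟨j - 1, by simp [e, h1, h3], e⟩
    · intro i hi
      simp only [Finset.mem_filter] at hi
      exact h i hi.1 hi.2
  rw [this]
  ring

lemma cardR (M : ℕ) (G : Finset ℕ) (hG : G ⊆ Finset.range M) :
    (G.filter (fun i => i + 1 ∉ G)).card ≤ (Finset.range M \ G).card + 1 := by
  refine le_trans (Finset.card_le_card_of_injOn (t := insert M (Finset.range M \ G)) (fun i => i + 1) ?_ ?_)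
    (Finset.card_insert_le _ _)
  · intro i hi
    simp only [Finset.coe_filter, Set.mem_ofPred_eq] at hi
    have := Finset.mem_range.mp (hG hi.1)
    simp only [Finset.coe_insert, Set.mem_insert_iff, Finset.mem_coe, Finset.mem_sdiff, Finset.mem_range]
    by_cases h : i + 1 = M
    · exact Or.inl h
    · exact Or.inr ⟨by omega, hi.2⟩
  · intro i _ j _ hij
    simpa using hij

lemma cardL (M : ℕ) (G : Finset ℕ) (hG : G ⊆ Finset.range M) :
    (G.filter (fun i => ¬ (i ≠ 0 ∧ i - 1 ∈ G))).card ≤ (Finset.range M \ G).card + 1 := by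
  refine le_trans (Finset.card_le_card (t := insert 0 ((Finset.range M \ G).image (· + 1))) ?_)
    ((Finset.card_insert_le _ _).trans (Nat.add_le_add_right Finset.card_image_le 1))
  intro i hi
  simp only [Finset.mem_filter] at hi
  have := Finset.mem_range.mp (hG hi.1)
  simp only [Finset.mem_insert, Finset.mem_image, Finset.mem_sdiff, Finset.mem_range]
  by_cases h : i = 0
  · exact Or.inl h
  · exact Or.inr ⟨i - 1, ⟨by omega, fun h' => hi.2 ⟨h, h'⟩⟩, by omega⟩

lemma key : ∃ D : ℝ, 0 < D ∧ ∀ (M : ℕ) (ε : ℝ), 0 < ε → M * ε = 2 * π →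
    ∀ (G : Finset ℕ), G ⊆ Finset.range M → ∀ (a b : ℕ → ℝ) (f : ℝ → ℂ),
    IntervalIntegrable f volume 0 (2 * π) → (∀ t, ‖f t‖ ≤ 1) →
    (∀ i ∈ G, ∀ t ∈ Set.Ioo (i * ε : ℝ) (i * ε + ε),
      f t = Complex.exp (Complex.I * ((a i * t + b i : ℝ) : ℂ))) →
    (∀ i ∈ G, i + 1 ∈ G → a i = a (i + 1) ∧ b i = b (i + 1)) →
    ∀ A : Finset ℤ, (∀ i ∈ G, ∀ k ∈ A, 4 * π / ε ≤ |a i - k|) →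
    ∑ k ∈ A, ‖fourierCoef f k‖ ^ 2 ≤ D * ((((Finset.range M \ G).card : ℝ) + 1) * ε) := by
  obtain ⟨κ, -, hκi, hκm, hκ1, hκ0⟩ := exists_kernel
  set C := ∫ s, ‖κ s‖ * (|s| + 1) with hC
  have hC0 : 0 ≤ C := integral_nonneg fun s => by positivity
  refine ⟨(1 + 4 * C) ^ 2, by positivity, ?_⟩
  intro M ε hε hM G hG a b f hfi hf1 hfG hadj A far
  set θ := 1 + 4 * C with hθ
  have hθ0 : 0 < θ := by positivity
  set d : ℤ → ℂ := fun k => (starRingEnd ℂ) (fourierCoef f k) with hd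
  have hdn : ∀ k, ‖d k‖ = ‖fourierCoef f k‖ := fun k => by simp [hd]
  have hc := tp_cont A d
  set S := ∑ k ∈ A, ‖d k‖ ^ 2 with hS
  set B := (Finset.range M \ G).card with hB
  have hSe : ∑ k ∈ A, ‖fourierCoef f k‖ ^ 2 = S := by simp [hS, hdn]
  have hS0 : 0 ≤ S := by positivity
  rw [hSe]
  have hne : ∀ i ∈ G, ∀ k ∈ A, a i ≠ k := by
    intro i hi k hk h
    have := far i hi k hk
    rw [h, sub_self, abs_zero] at this
    have h2 : 0 < 4 * π / ε := by positivity
    linarith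
  have hpi : (π : ℂ) ≠ 0 := by exact_mod_cast Real.pi_ne_zero
  -- duality
  have e1 : ∫ t in (0:ℝ)..(2 * π), f t * tp A d t = ((2 * π * S : ℝ) : ℂ) := by
    have : ∀ t, f t * tp A d t = ∑ k ∈ A, d k * (f t * Complex.exp (-Complex.I * (k : ℂ) * (t : ℂ))) := by
      intro t
      rw [tp, Finset.mul_sum]
      exact Finset.sum_congr rfl fun k _ => by ring
    simp_rw [this]
    rw [intervalIntegral.integral_finsetSum]
    · rw [hS]
      push_cast
      rw [Finset.mul_sum]
      refine Finset.sum_congr rfl fun k _ => ?_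
      rw [intervalIntegral.integral_const_mul, hdn, ← Complex.mul_conj']
      have : ∫ t in (0:ℝ)..(2 * π), f t * Complex.exp (-Complex.I * (k : ℂ) * (t : ℂ)) =
          2 * π * fourierCoef f k := by
        unfold fourierCoef
        field_simp
      rw [this]
      simp only [hd]
      ring
    · intro k _
      exact (hfi.mul_continuousOn (by fun_prop)).const_mul _
  have hfii : ∀ i ∈ Finset.range M, IntervalIntegrable f volume (i * ε) (i * ε + ε) := by
    intro i hi
    refine hfi.mono_set ?_
    have h1 : (i:ℝ) + 1 ≤ M := by exact_mod_cast Finset.mem_range.mp hi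
    rw [uIcc_of_le (by linarith), uIcc_of_le (by positivity)]
    refine Icc_subset_Icc (by positivity) ?_
    rw [← hM]
    nlinarith
  have e2 : ∑ i ∈ Finset.range M, ∫ t in (i * ε : ℝ)..(i * ε + ε), f t * tp A d t =
      ∫ t in (0:ℝ)..(2 * π), f t * tp A d t := by
    have := intervalIntegral.sum_integral_adjacent_intervals (f := fun t => f t * tp A d t)
      (a := fun i : ℕ => (i * ε : ℝ)) (n := M) (μ := volume) ?_
    · rw [hM] at this
      simp only [Nat.cast_zero, zero_mul] at this
      rw [← this]
      refine Finset.sum_congr rfl fun i _ => ?_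
      push_cast
      rw [add_mul, one_mul]
    · intro k hk
      have := hfii k (Finset.mem_range.mpr hk)
      push_cast
      rw [add_mul, one_mul]
      exact this.mul_continuousOn (by fun_prop)
  rw [← Finset.sum_sdiff hG] at e2
  have e3 : ∑ i ∈ G, ∫ t in (i * ε : ℝ)..(i * ε + ε), f t * tp A d t =
      ∑ i ∈ G, (tq A d (a i) (b i) (i * ε + ε) - tq A d (a i) (b i) (i * ε)) := by
    refine Finset.sum_congr rfl fun i hi => ?_
    rw [tq_incr A d (a i) (b i) (hne i hi)]
    refine intervalIntegral.integral_congr_Ioo_of_le (by linarith) fun t ht => ?_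
    rw [hfG i hi t ht]
  rw [telescope G (fun i => tq A d (a i) (b i) (i * ε + ε)) (fun i => tq A d (a i) (b i) (i * ε))] at e3
  swap
  · intro i hi hi'
    obtain ⟨h1, h2⟩ := hadj i hi hi'
    rw [h1, h2]
    push_cast
    rw [add_mul, one_mul]
  set W := θ / 2 * ((B + 1) * ε) + 1 / (2 * θ) * (2 * π * S) with hW
  have bR : ‖∑ i ∈ G with i + 1 ∉ G, tq A d (a i) (b i) (i * ε + ε)‖ ≤ 2 * C * W := by
    refine (norm_sum_le _ _).trans ?_
    refine (sumQ κ hκi hκm hκ1 hκ0 A d a b M ε hε hM _ ((Finset.filter_subset _ _).trans hG)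
      (fun i hi => far i (Finset.mem_filter.mp hi).1) ε θ hθ0).trans ?_
    have : ((G.filter (fun i => i + 1 ∉ G)).card : ℝ) ≤ B + 1 := by exact_mod_cast cardR M G hG
    refine mul_le_mul_of_nonneg_left ?_ (by positivity)
    rw [hW]
    gcongr
  have bL : ‖∑ i ∈ G with ¬ (i ≠ 0 ∧ i - 1 ∈ G), tq A d (a i) (b i) (i * ε)‖ ≤ 2 * C * W := by
    refine (norm_sum_le _ _).trans ?_
    have := (sumQ κ hκi hκm hκ1 hκ0 A d a b M ε hε hM (G.filter (fun i => ¬ (i ≠ 0 ∧ i - 1 ∈ G)))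
      ((Finset.filter_subset _ _).trans hG)
      (fun i hi => far i (Finset.mem_filter.mp hi).1) 0 θ hθ0)
    simp only [add_zero] at this
    refine this.trans ?_
    have : ((G.filter (fun i => ¬ (i ≠ 0 ∧ i - 1 ∈ G))).card : ℝ) ≤ B + 1 := by
      exact_mod_cast cardL M G hG
    refine mul_le_mul_of_nonneg_left ?_ (by positivity)
    rw [hW]
    gcongr
  have bB : ‖∑ i ∈ Finset.range M \ G, ∫ t in (i * ε : ℝ)..(i * ε + ε), f t * tp A d t‖ ≤ W := by
    refine (norm_sum_le _ _).trans ?_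
    have h1 := cells M ε hε hM (fun t => ‖tp A d t‖) (by fun_prop) (Finset.range M \ G)
      Finset.sdiff_subset θ hθ0
    have h2 := tp_parseval A d 0
    simp only [add_zero] at h2
    rw [h2] at h1
    refine le_trans ?_ (h1.trans ?_)
    · refine Finset.sum_le_sum fun i hi => ?_
      refine intervalIntegral.norm_integral_le_of_norm_le (by linarith) ?_
        (Continuous.intervalIntegrable (by fun_prop) _ _)
      refine Filter.Eventually.of_forall fun t _ => ?_
      rw [norm_mul]
      exact mul_le_of_le_one_left (norm_nonneg _) (hf1 t)
    · rw [hW]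
      gcongr
      linarith
  rw [e3, e1] at e2
  have e4 : 2 * π * S ≤ θ * W := by
    have : ‖((2 * π * S : ℝ) : ℂ)‖ = 2 * π * S := by
      rw [Complex.norm_real, Real.norm_of_nonneg (by positivity)]
    rw [← this, ← e2]
    refine (norm_add_le _ _).trans ?_
    have := norm_sub_le (∑ i ∈ G with i + 1 ∉ G, tq A d (a i) (b i) (i * ε + ε))
      (∑ i ∈ G with ¬ (i ≠ 0 ∧ i - 1 ∈ G), tq A d (a i) (b i) (i * ε))
    rw [hθ]
    linarith
  have e5 : θ * W = θ ^ 2 / 2 * ((B + 1) * ε) + π * S := by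
    rw [hW]; field_simp
  have e6 : S ≤ 2 * π * S := by nlinarith [Real.pi_gt_three]
  nlinarith

lemma lin_uniq (u ε a b a' b' : ℝ) (hε : 0 < ε)
    (h : ∀ t ∈ Set.Ioo u (u + ε), a * t + b = a' * t + b') : a = a' ∧ b = b' := by
  have h1 := h (u + ε / 3) ⟨by linarith, by linarith⟩
  have h2 := h (u + 2 * ε / 3) ⟨by linarith, by linarith⟩
  have h3 : (a - a') * ε = 0 := by linear_combination 3 * (h2 - h1)
  have h4 : a = a' := by
    rcases mul_eq_zero.mp h3 with h | h
    · linarith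
    · linarith
  subst h4
  exact ⟨rfl, by linarith⟩

lemma card_meet (M : ℕ) (ε c r : ℝ) (hε : 0 < ε) (hr : r ≤ ε) :
    ((Finset.range M).filter (fun i : ℕ => (i * ε : ℝ) ≤ c + r ∧ c ≤ i * ε + ε)).card ≤ 3 := by
  have h1 : (Finset.Icc ⌈c / ε - 1⌉ ⌊c / ε + 1⌋).card ≤ 3 := by
    rw [Int.card_Icc, Int.ceil_sub_one, Int.floor_add_one]
    have := Int.floor_le_ceil (c / ε)
    omega
  refine le_trans (Finset.card_le_card_of_injOn (fun i : ℕ => (i : ℤ)) ?_ ?_) h1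
  · intro i hi
    simp only [Finset.coe_filter, Set.mem_ofPred_eq] at hi
    obtain ⟨_, h2, h3⟩ := hi
    simp only [Finset.coe_Icc, Set.mem_Icc]
    rw [Int.ceil_le, Int.le_floor]
    constructor
    · rw [sub_le_iff_le_add, div_le_iff₀ hε]
      push_cast
      linarith
    · rw [← sub_le_iff_le_add, le_div_iff₀ hε]
      push_cast
      linarith
  · intro i _ j _ hij
    simpa using hij

open Classical in
lemma scale (D : ℝ)
    (hD : ∀ (M : ℕ) (ε : ℝ), 0 < ε → M * ε = 2 * π →
    ∀ (G : Finset ℕ), G ⊆ Finset.range M → ∀ (a b : ℕ → ℝ) (f : ℝ → ℂ),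
    IntervalIntegrable f volume 0 (2 * π) → (∀ t, ‖f t‖ ≤ 1) →
    (∀ i ∈ G, ∀ t ∈ Set.Ioo (i * ε : ℝ) (i * ε + ε),
      f t = Complex.exp (Complex.I * ((a i * t + b i : ℝ) : ℂ))) →
    (∀ i ∈ G, i + 1 ∈ G → a i = a (i + 1) ∧ b i = b (i + 1)) →
    ∀ A : Finset ℤ, (∀ i ∈ G, ∀ k ∈ A, 4 * π / ε ≤ |a i - k|) →
    ∑ k ∈ A, ‖fourierCoef f k‖ ^ 2 ≤ D * ((((Finset.range M \ G).card : ℝ) + 1) * ε))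
    (hD0 : 0 < D)
    (E : Set ℝ) (g : ℝ → ℝ)
    (hg : ∀ u v : ℝ, u < v → Set.Ioo u v ⊆ Set.Icc 0 (2 * Real.pi) \ E →
            ∃ a b : ℝ, ∀ t ∈ Set.Ioo u v, g t = a * t + b)
    (hfi : IntervalIntegrable (fun t => Complex.exp (Complex.I * (g t : ℂ))) volume 0 (2 * π))
    (M : ℕ) (ε : ℝ) (hε : 0 < ε) (hM : M * ε = 2 * π) (N : ℕ) (r : ℝ) (hr : r ≤ ε)
    (ctr : Fin N → ℝ) (hcov : E ⊆ ⋃ i, Set.Icc (ctr i) (ctr i + r)) :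
    ∃ near : Finset ℤ, (near.card : ℝ) ≤ (3 * N + 1) * (8 * π / ε + 1) ∧
      ∀ K : Finset ℤ, Disjoint K near →
        ∑ k ∈ K, ‖fourierCoef (fun t => Complex.exp (Complex.I * (g t : ℂ))) k‖ ^ 2 ≤
          D * ((3 * N + 1) * ε) := by
  set G := (Finset.range M).filter (fun i : ℕ => Disjoint (Set.Icc (i * ε : ℝ) (i * ε + ε)) E) with hG
  have hGM : G ⊆ Finset.range M := Finset.filter_subset _ _
  have hle : ∀ i ∈ G, (i:ℝ) * ε + ε ≤ 2 * π := by
    intro i hi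
    have h1 : (i:ℝ) + 1 ≤ M := by exact_mod_cast Finset.mem_range.mp (hGM hi)
    rw [← hM]
    nlinarith
  have hdis : ∀ i ∈ G, Disjoint (Set.Icc (i * ε : ℝ) (i * ε + ε)) E := fun i hi =>
    (Finset.mem_filter.mp hi).2
  have hex : ∀ i : ℕ, ∃ a b : ℝ, i ∈ G → ∀ t ∈ Set.Ioo (i * ε : ℝ) (i * ε + ε), g t = a * t + b := by
    intro i
    by_cases hi : i ∈ G
    · obtain ⟨a, b, h⟩ := hg (i * ε) (i * ε + ε) (by linarith) (by
        intro t ht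
        have h1 := hle i hi
        have h2 : (0:ℝ) ≤ i * ε := by positivity
        exact ⟨⟨by linarith [ht.1], by linarith [ht.2]⟩,
          Set.disjoint_left.mp (hdis i hi) ⟨ht.1.le, ht.2.le⟩⟩)
      exact ⟨a, b, fun _ => h⟩
    · exact ⟨0, 0, fun h => absurd h hi⟩
  choose a b hab using hex
  have hadj : ∀ i ∈ G, i + 1 ∈ G → a i = a (i + 1) ∧ b i = b (i + 1) := by
    intro i hi hi'
    have hc1 := hdis (i+1) hi'
    have hl1 := hle (i+1) hi'
    have hab' := hab (i+1) hi'
    push_cast at hc1 hl1 hab'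
    obtain ⟨a', b', h⟩ := hg (i * ε) (i * ε + 2 * ε) (by linarith) (by
        intro t ht
        have h2 : (0:ℝ) ≤ i * ε := by positivity
        refine ⟨⟨by linarith [ht.1], by linarith [ht.2]⟩, ?_⟩
        by_cases htt : t ≤ i * ε + ε
        · exact Set.disjoint_left.mp (hdis i hi) ⟨ht.1.le, htt⟩
        · exact Set.disjoint_left.mp hc1 ⟨by linarith, by linarith [ht.2]⟩)
    have u1 := lin_uniq (i * ε) ε (a i) (b i) a' b' hε (fun t ht => by
      rw [← hab i hi t ht, h t ⟨ht.1, by linarith [ht.2]⟩])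
    have u2 := lin_uniq ((i + 1) * ε) ε (a (i+1)) (b (i+1)) a' b' hε (fun t ht => by
      rw [← hab' t ht, h t ⟨by linarith [ht.1], by linarith [ht.2]⟩])
    exact ⟨u1.1.trans u2.1.symm, u1.2.trans u2.2.symm⟩
  -- number of bad cells
  have hbad : (Finset.range M \ G).card ≤ 3 * N := by
    have : Finset.range M \ G ⊆ (Finset.univ : Finset (Fin N)).biUnion (fun j =>
        (Finset.range M).filter (fun i : ℕ => (i * ε : ℝ) ≤ ctr j + r ∧ ctr j ≤ i * ε + ε)) := by
      intro i hi
      rw [Finset.mem_sdiff] at hi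
      have h1 : ¬ Disjoint (Set.Icc (i * ε : ℝ) (i * ε + ε)) E := fun h =>
        hi.2 (Finset.mem_filter.mpr ⟨hi.1, h⟩)
      obtain ⟨t, ht, htE⟩ := Set.not_disjoint_iff.mp h1
      obtain ⟨j, hj⟩ := Set.mem_iUnion.mp (hcov htE)
      simp only [Finset.mem_biUnion, Finset.mem_univ, true_and, Finset.mem_filter]
      exact ⟨j, hi.1, ht.1.trans hj.2, hj.1.trans ht.2⟩
    refine (Finset.card_le_card this).trans (Finset.card_biUnion_le.trans ?_)
    refine (Finset.sum_le_sum fun j _ => card_meet M ε (ctr j) r hε hr).trans ?_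
    simp [mul_comm]
  set R := 4 * π / ε with hR
  have hR0 : 0 < R := by positivity
  set L := G.filter (fun i => ¬ (i ≠ 0 ∧ i - 1 ∈ G)) with hL
  have hLc : L.card ≤ 3 * N + 1 := (cardL M G hGM).trans (by omega)
  have hslope : ∀ i, i ∈ G → ∃ j ∈ L, a j = a i := by
    intro i
    induction i with
    | zero => exact fun h => ⟨0, by simp [hL, h], rfl⟩
    | succ n ih =>
      intro h
      by_cases hn : n ∈ G
      · obtain ⟨j, hj, hj'⟩ := ih hn
        exact ⟨j, hj, hj'.trans (hadj n hn h).1⟩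
      · exact ⟨n + 1, by simp [hL, h, hn], rfl⟩
  refine ⟨L.biUnion fun i => Finset.Icc ⌈a i - R⌉ ⌊a i + R⌋, ?_, ?_⟩
  · have h1 : ∀ i ∈ L, ((Finset.Icc ⌈a i - R⌉ ⌊a i + R⌋).card : ℝ) ≤ 8 * π / ε + 1 := by
      intro i _
      rw [Int.card_Icc]
      have e1 := Int.floor_le (a i + R)
      have e2 := Int.le_ceil (a i - R)
      have e3 : 8 * π / ε = 2 * R := by rw [hR]; ring
      rw [e3]
      have e4 : (((⌊a i + R⌋ + 1 - ⌈a i - R⌉).toNat : ℤ) : ℝ) ≤ 2 * R + 1 := by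
        rw [Int.toNat_eq_max]
        push_cast
        refine max_le (by linarith) (by linarith)
      exact_mod_cast e4
    calc _ ≤ ((∑ i ∈ L, (Finset.Icc ⌈a i - R⌉ ⌊a i + R⌋).card : ℕ) : ℝ) := by
          exact_mod_cast Finset.card_biUnion_le
      _ ≤ ∑ i ∈ L, (8 * π / ε + 1) := by
          push_cast
          exact Finset.sum_le_sum h1
      _ = L.card * (8 * π / ε + 1) := by rw [Finset.sum_const, nsmul_eq_mul]
      _ ≤ _ := by
          have : (L.card : ℝ) ≤ 3 * N + 1 := by exact_mod_cast hLc
          gcongr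
  · intro K hK
    have := hD M ε hε hM G hGM a b (fun t => Complex.exp (Complex.I * (g t : ℂ))) hfi
      (fun t => (norm_expI _).le) (fun i hi t ht => by rw [hab i hi t ht]) hadj K (by
        intro i hi k hk
        obtain ⟨j, hj, hj'⟩ := hslope i hi
        rw [← hj']
        by_contra hlt
        push Not at hlt
        have hlt' := abs_lt.mp hlt
        refine Finset.disjoint_left.mp hK hk (Finset.mem_biUnion.mpr ⟨j, hj, ?_⟩)
        rw [Finset.mem_Icc, Int.ceil_le, Int.le_floor]
        constructor <;> linarith [hlt'.1, hlt'.2])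
    refine this.trans ?_
    have : ((Finset.range M \ G).card : ℝ) ≤ 3 * N := by exact_mod_cast hbad
    gcongr

lemma pow_split (p η x : ℝ) (hp1 : 1 < p) (hp2 : p < 2) (hη : 0 < η) (hx : 0 ≤ x) :
    x ^ p ≤ η ^ (p - 2) * x ^ 2 + η ^ p := by
  by_cases h : x ≤ η
  · have h1 : x ^ p ≤ η ^ p := Real.rpow_le_rpow hx h (by linarith)
    have h2 : 0 ≤ η ^ (p - 2) * x ^ 2 := by positivity
    linarith
  · push Not at h
    have hx' : 0 < x := hη.trans h
    have h1 : x ^ p = x ^ (p - 2) * x ^ 2 := by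
      rw [← Real.rpow_natCast, ← Real.rpow_add hx']
      norm_num
    have h2 : x ^ (p - 2) ≤ η ^ (p - 2) :=
      Real.rpow_le_rpow_of_nonpos hη h.le (by linarith)
    have h3 : 0 ≤ η ^ p := by positivity
    rw [h1]
    nlinarith [sq_nonneg x, mul_le_mul_of_nonneg_right h2 (sq_nonneg x)]

lemma block (p : ℝ) (hp1 : 1 < p) (hp2 : p < 2) (F : ℤ → ℝ) (hF : ∀ k, 0 ≤ F k) (X : Finset ℤ)
    (ε w c1 c2 : ℝ) (hε : 0 < ε) (hw : 0 < w)
    (h2 : ∑ k ∈ X, F k ^ 2 ≤ c2 * ε / w) (h1 : (X.card : ℝ) ≤ c1 / (w * ε)) :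
    ∑ k ∈ X, F k ^ p ≤ (c2 + c1) * (ε ^ (p - 1) / w) := by
  have e1 : ε ^ (p - 2) * ε = ε ^ (p - 1) := by
    rw [← Real.rpow_add_one hε.ne']; congr 1; ring
  have e2 : ε ^ p = ε ^ (p - 1) * ε := by
    rw [← Real.rpow_add_one hε.ne']; congr 1; ring
  calc _ ≤ ∑ k ∈ X, (ε ^ (p - 2) * F k ^ 2 + ε ^ p) :=
        Finset.sum_le_sum fun k _ => pow_split p ε (F k) hp1 hp2 hε (hF k)
    _ = ε ^ (p - 2) * ∑ k ∈ X, F k ^ 2 + X.card * ε ^ p := by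
        rw [Finset.sum_add_distrib, Finset.mul_sum, Finset.sum_const, nsmul_eq_mul]
    _ ≤ ε ^ (p - 2) * (c2 * ε / w) + c1 / (w * ε) * ε ^ p := by gcongr
    _ = _ := by
        rw [e2, ← e1]; field_simp

open Classical in
lemma final_sum (p : ℝ) (hp1 : 1 < p) (hp2 : p < 2) (F : ℤ → ℝ) (hF : ∀ k, 0 ≤ F k)
    (hF1 : ∀ k, F k ≤ 1) (ε w : ℕ → ℝ) (hε : ∀ l, 0 < ε l) (hw : ∀ l, 0 < w l)
    (hε2 : ∀ l, ε l = 2 * ε (l + 1)) (hwm : ∀ l, w (l + 1) ≤ w l) (c1 c2 c3 : ℝ) (hc2 : 0 ≤ c2)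
    (near : ℕ → Finset ℤ) (hn : ∀ l, ((near l).card : ℝ) ≤ c1 / (w l * ε l))
    (hfar : ∀ l, ∀ K : Finset ℤ, Disjoint K (near l) → ∑ k ∈ K, F k ^ 2 ≤ c2 * ε l / w l)
    (K : Finset ℤ) (L : ℕ) (hK : (K.card : ℝ) ≤ c3 / (w L * ε L)) :
    ∑ k ∈ K, F k ^ p ≤ c1 / (w 0 * ε 0) +
      ∑ l ∈ Finset.range L, (2 * c2 + c1) * (ε (l + 1) ^ (p - 1) / w (l + 1)) +
      (c2 + c3) * (ε L ^ (p - 1) / w L) := by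
  have ind : ∀ n, ∑ k ∈ K, F k ^ p ≤ c1 / (w 0 * ε 0) +
      ∑ l ∈ Finset.range n, (2 * c2 + c1) * (ε (l + 1) ^ (p - 1) / w (l + 1)) +
      ∑ k ∈ K with (∀ l ≤ n, k ∉ near l), F k ^ p := by
    intro n
    induction n with
    | zero =>
      rw [← Finset.sum_filter_add_sum_filter_not K (fun k => k ∈ near 0)]
      have h1 : ∑ k ∈ K with k ∈ near 0, F k ^ p ≤ c1 / (w 0 * ε 0) := by
        calc _ ≤ ∑ k ∈ K with k ∈ near 0, (1:ℝ) := Finset.sum_le_sum fun k _ =>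
              Real.rpow_le_one (hF k) (hF1 k) (by linarith)
          _ ≤ ((near 0).card : ℝ) := by
              rw [Finset.sum_const, nsmul_eq_mul, mul_one]
              exact_mod_cast Finset.card_le_card fun k hk => (Finset.mem_filter.mp hk).2
          _ ≤ _ := hn 0
      simpa using h1
    | succ n ih =>
      refine ih.trans ?_
      rw [Finset.sum_range_succ]
      rw [← Finset.sum_filter_add_sum_filter_not (K.filter (fun k => ∀ l ≤ n, k ∉ near l))
        (fun k => k ∈ near (n + 1))]
      have h1 : ∑ k ∈ (K.filter (fun k => ∀ l ≤ n, k ∉ near l)) with k ∈ near (n + 1), F k ^ p ≤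
          (2 * c2 + c1) * (ε (n + 1) ^ (p - 1) / w (n + 1)) := by
        refine block p hp1 hp2 F hF _ _ _ _ _ (hε _) (hw _) ?_ ?_
        · refine (hfar n _ ?_).trans ?_
          · rw [Finset.disjoint_left]
            intro k hk
            simp only [Finset.mem_filter] at hk
            exact hk.1.2 n le_rfl
          · rw [hε2 n, show 2 * c2 * ε (n + 1) = c2 * (2 * ε (n + 1)) by ring]
            have := hε (n + 1)
            have := hw (n + 1)
            have := hwm n
            gcongr
        · refine le_trans ?_ (hn (n + 1))
          exact_mod_cast Finset.card_le_card fun k hk => (Finset.mem_filter.mp hk).2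
      have h2 : (K.filter (fun k => ∀ l ≤ n, k ∉ near l)).filter (fun k => k ∉ near (n + 1)) =
          K.filter (fun k => ∀ l ≤ n + 1, k ∉ near l) := by
        ext k
        simp only [Finset.mem_filter, and_assoc]
        refine and_congr_right fun _ => ?_
        constructor
        · rintro ⟨h3, h4⟩ l hl
          rcases Nat.le_succ_iff.mp hl with h | h
          · exact h3 l h
          · rw [h]; exact h4
        · intro h
          exact ⟨fun l hl => h l (by omega), h (n + 1) le_rfl⟩
      rw [h2]
      linarith
  refine (ind L).trans ?_
  gcongr
  refine block p hp1 hp2 F hF _ _ _ _ _ (hε _) (hw _) ?_ ?_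
  · refine hfar L _ ?_
    rw [Finset.disjoint_left]
    intro k hk
    exact (Finset.mem_filter.mp hk).2 L le_rfl
  · refine le_trans ?_ hK
    exact_mod_cast Finset.card_le_card (Finset.filter_subset _ _)

lemma coef_le_one (f : ℝ → ℂ) (hf : ∀ t, ‖f t‖ ≤ 1) (k : ℤ) : ‖fourierCoef f k‖ ≤ 1 := by
  unfold fourierCoef
  have h1 : ‖∫ t in (0:ℝ)..(2 * π), f t * Complex.exp (-Complex.I * (k : ℂ) * (t : ℂ))‖ ≤
      1 * |2 * π - 0| := by
    refine intervalIntegral.norm_integral_le_of_norm_le_const fun t _ => ?_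
    rw [norm_mul]
    have := norm_expI (-(k * t))
    push_cast at this
    rw [show -Complex.I * k * t = Complex.I * -(k * t : ℂ) by ring, this, mul_one]
    exact hf t
  rw [norm_mul]
  have h2 : ‖(1 / (2 * (π : ℂ)))‖ = 1 / (2 * π) := by
    rw [norm_div, norm_mul, Complex.norm_real, Real.norm_of_nonneg Real.pi_pos.le]
    simp
  rw [h2]
  rw [sub_zero, abs_of_pos (by positivity), one_mul] at h1
  calc _ ≤ 1 / (2 * π) * (2 * π) := by gcongr
    _ = 1 := by field_simp

lemma coef_nonint (f : ℝ → ℂ) (hf : ¬ IntervalIntegrable f volume 0 (2 * π)) (k : ℤ) :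
    fourierCoef f k = 0 := by
  unfold fourierCoef
  rw [intervalIntegral.integral_undef, mul_zero]
  intro h
  apply hf
  have := h.mul_continuousOn (g := fun t : ℝ => Complex.exp (Complex.I * (k : ℂ) * (t : ℂ))) (by fun_prop)
  refine this.congr fun t _ => ?_
  rw [mul_assoc, ← Complex.exp_add]
  simp

/-- Lemma 7: for 1 < p < 2 and g linear on each interval complementary
to the Cantor-type set E, Σ_{|k|≤2λ} |(e^{ig})^∧(k)|^p ≤ c_p·(Θ_p(λ))^p,
where (Θ_p(y))^p = ∫₁^y (χ^{-1}(1/τ))^p dτ. -/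
theorem statement12
    (p : ℝ) (hp1 : 1 < p) (hp2 : p < 2)
    -- ω is a modulus of continuity: continuous non-decreasing on [0,∞), ω(0)=0, ω(δ)>0 for δ>0,
    -- with χ(δ) = δ·ω(δ) strictly increasing and unbounded, and χinv its inverse.
    (ω : ℝ → ℝ)
    (hω_cont : ContinuousOn ω (Ici 0)) (hω_mono : MonotoneOn ω (Ici 0))
    (hω_zero : ω 0 = 0) (hω_pos : ∀ δ : ℝ, 0 < δ → 0 < ω δ)
    (hχ_mono : StrictMonoOn (fun δ => δ * ω δ) (Ici 0))
    (hχ_unbdd : ∀ y : ℝ, ∃ δ : ℝ, 0 ≤ δ ∧ y < δ * ω δ)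
    (χinv : ℝ → ℝ)
    (hχinv_left : ∀ δ : ℝ, 0 ≤ δ → χinv (δ * ω δ) = δ)
    (hχinv_right : ∀ y : ℝ, 0 ≤ y → 0 ≤ χinv y ∧ χinv y * ω (χinv y) = y)
    (hω_2pi : ω (2 * Real.pi) = 1)
    (hω_doubling : ∀ δ : ℝ, 0 < δ → δ ≤ 2 * Real.pi → ω (2 * δ) < 2 * ω δ)
    (ρ : ℕ → ℝ) (hρ_pos : ∀ j : ℕ, 0 < ρ j) (hρ0 : ρ 0 = 2 * Real.pi)
    (hρ : ∀ j : ℕ, ω (ρ j) = (2 : ℝ) ^ (-(j : ℝ)))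
    (E : Set ℝ) (hE_sub : E ⊆ Icc 0 (2 * Real.pi)) (hE_closed : IsClosed E)
    (hE_cover : ∀ j : ℕ, ∃ centers : Fin (2 ^ j) → ℝ,
      E ⊆ ⋃ i : Fin (2 ^ j), Icc (centers i) (centers i + ρ j)) :
    ∃ c : ℝ, 0 < c ∧
      ∀ lam : ℝ, 2 ≤ lam →
        ∀ g : ℝ → ℝ,
          (∀ u v : ℝ, u < v → Ioo u v ⊆ Icc 0 (2 * Real.pi) \ E →
            ∃ a b : ℝ, ∀ t ∈ Ioo u v, g t = a * t + b) →
          ∑ k ∈ Finset.Icc (-⌊2 * lam⌋) ⌊2 * lam⌋,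
            ‖fourierCoef (fun t => Complex.exp (Complex.I * (g t : ℂ))) k‖ ^ p
            ≤ c * ∫ τ in (1:ℝ)..lam, (χinv (1 / τ)) ^ p := by
  obtain ⟨D, hD0, hD⟩ := key
  have hpi := Real.pi_pos
  set ε : ℕ → ℝ := fun l => 2 * π / 2 ^ l with hεd
  set w : ℕ → ℝ := fun l => ω (ε l) with hwd
  have hε : ∀ l, 0 < ε l := fun l => by positivity
  have hw : ∀ l, 0 < w l := fun l => hω_pos _ (hε l)
  have hε2 : ∀ l, ε l = 2 * ε (l + 1) := fun l => by simp only [hεd]; field_simp; ring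
  have hεle : ∀ l, ε l ≤ 2 * π := fun l => by
    simp only [hεd]
    exact div_le_self (by positivity) (one_le_pow₀ (by norm_num))
  have hwm : ∀ l, w (l + 1) ≤ w l := fun l =>
    hω_mono (hε _).le (hε _).le (by rw [hε2 l]; linarith [hε (l + 1)])
  have hwd2 : ∀ l, w l ≤ 2 * w (l + 1) := fun l => by
    have := hω_doubling (ε (l + 1)) (hε _) (hεle _)
    rw [← hε2 l] at this
    exact this.le
  have hw1 : ∀ l, w l ≤ 1 := fun l => by
    rw [← hω_2pi]
    exact hω_mono (hε _).le (by simp [hpi.le]) (hεle l)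
  have hρ' : ∀ j, ω (ρ j) = (1 / 2) ^ j := fun j => by
    rw [hρ j, Real.rpow_neg (by norm_num), Real.rpow_natCast]
    simp
  -- choice of the covering scale
  have hj : ∀ l, ∃ j, ρ j ≤ ε l ∧ (2:ℝ) ^ j ≤ 2 / w l := by
    intro l
    have hex : ∃ j : ℕ, (1 / 2 : ℝ) ^ j < w l := exists_pow_lt_of_lt_one (hw l) (by norm_num)
    classical
    have hs := Nat.find_spec hex
    have hm := fun m => Nat.find_min hex (m := m)
    set j := Nat.find hex
    have hj0 : j ≠ 0 := by
      intro h
      rw [h, pow_zero] at hs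
      linarith [hw1 l]
    obtain ⟨m, hm'⟩ := Nat.exists_eq_succ_of_ne_zero hj0
    refine ⟨j, ?_, ?_⟩
    · by_contra hlt
      push Not at hlt
      have := hω_mono (hε l).le (hρ_pos j).le hlt.le
      rw [hρ' j] at this
      exact absurd hs (not_lt.mpr this)
    · have h1 := hm m (by omega)
      push Not at h1
      rw [le_div_iff₀ (hw l), hm', pow_succ]
      have h2 : (2:ℝ) ^ m * (1 / 2) ^ m = 1 := by rw [← mul_pow]; norm_num
      have h3 : (0:ℝ) < 2 ^ m := by positivity
      nlinarith
  -- tau and integral facts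
  set τ : ℕ → ℝ := fun l => 1 / (ε l * w l) with hτd
  have hτ0 : ∀ l, 0 < τ l := fun l => by
    have := hε l
    have := hw l
    positivity
  have hτ2 : ∀ l, 2 * τ l ≤ τ (l + 1) := fun l => by
    have h1 := hε (l + 1)
    have h2 := hw (l + 1)
    have h3 := hw l
    simp only [hτd]
    rw [hε2 l, mul_one_div, div_le_div_iff₀ (by positivity) (by positivity)]
    nlinarith [mul_le_mul_of_nonneg_left (hwm l) h1.le]
  have hτ4 : ∀ l, τ (l + 1) ≤ 4 / (w l * ε l) := fun l => by
    have h1 := hε (l + 1)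
    have h2 := hw (l + 1)
    have h3 := hw l
    simp only [hτd]
    rw [hε2 l, div_le_div_iff₀ (by positivity) (by positivity)]
    nlinarith [mul_le_mul_of_nonneg_left (hwd2 l) h1.le]
  have hτmono : Monotone τ := monotone_nat_of_le_succ fun l => by linarith [hτ2 l, hτ0 l]
  have hτpow : ∀ l, 2 ^ l * τ 0 ≤ τ l := fun l => by
    induction l with
    | zero => simp
    | succ n ih => rw [pow_succ]; linarith [hτ2 n]
  have hτzero : τ 0 = 1 / (2 * π) := by
    simp [hτd, hwd, hεd, hω_2pi]
  have hτ3 : 1 ≤ τ 3 := by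
    refine le_trans ?_ (hτpow 3)
    rw [hτzero, mul_one_div, le_div_iff₀ (by positivity)]
    linarith [Real.pi_lt_four]
  have hχm : ∀ x y : ℝ, 0 ≤ x → x ≤ y → χinv x ≤ χinv y := by
    intro x y hx hxy
    by_contra hlt
    push Not at hlt
    have h1 := hχinv_right x hx
    have h2 := hχinv_right y (hx.trans hxy)
    have := hχ_mono h2.1 h1.1 hlt
    simp only [h1.2, h2.2] at this
    linarith
  set φ : ℝ → ℝ := fun t => (χinv (1 / t)) ^ p with hφ
  have hχ0 : ∀ t : ℝ, 0 < t → 0 ≤ χinv (1 / t) := fun t ht => (hχinv_right _ (by positivity)).1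
  have hφ0 : ∀ t : ℝ, 0 < t → 0 ≤ φ t := fun t ht => Real.rpow_nonneg (hχ0 t ht) _
  have hanti : AntitoneOn φ (Set.Ioi 0) := by
    intro x hx y hy hxy
    have hx' : 0 < x := hx
    have hy' : 0 < y := hy
    refine Real.rpow_le_rpow (hχ0 y hy) (hχm _ _ (by positivity) ?_) (by linarith)
    exact one_div_le_one_div_of_le hx' hxy
  have hInt : ∀ x y : ℝ, 0 < x → 0 < y → IntervalIntegrable φ volume x y := by
    intro x y hx hy
    refine (hanti.mono ?_).intervalIntegrable
    intro t ht
    exact lt_of_lt_of_le (lt_min hx hy) ht.1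
  set s : ℕ → ℝ := fun l => ε l ^ (p - 1) / w l with hsd
  have hs0 : ∀ l, 0 ≤ s l := fun l => by
    have := hε l
    have := hw l
    positivity
  have hstep : ∀ l, s (l + 1) ≤ 2 * ∫ t in (τ l)..(τ (l + 1)), φ t := by
    intro l
    have h1 : ε (l + 1) ^ p * (τ (l + 1) - τ l) ≤ ∫ t in (τ l)..(τ (l + 1)), φ t := by
      have : ∫ t in (τ l)..(τ (l + 1)), ε (l + 1) ^ p = ε (l + 1) ^ p * (τ (l + 1) - τ l) := by
        rw [intervalIntegral.integral_const, smul_eq_mul, mul_comm]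
      rw [← this]
      refine intervalIntegral.integral_mono_on (hτmono (Nat.le_succ l)) (by simp)
        (hInt _ _ (hτ0 _) (hτ0 _)) fun t ht => ?_
      have ht0 : 0 < t := (hτ0 l).trans_le ht.1
      refine Real.rpow_le_rpow (hε _).le ?_ (by linarith)
      have e1 := hχinv_left (ε (l + 1)) (hε _).le
      rw [← e1]
      have e2 : 0 < ε (l + 1) * ω (ε (l + 1)) := mul_pos (hε _) (hw (l + 1))
      refine hχm _ _ e2.le ?_
      rw [le_div_iff₀ ht0]
      have e3 := ht.2
      simp only [hτd, hwd] at e3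
      rw [le_div_iff₀ e2] at e3
      linarith
    have h2 : s (l + 1) = ε (l + 1) ^ p * τ (l + 1) := by
      have e2 : ε (l + 1) ^ p = ε (l + 1) ^ (p - 1) * ε (l + 1) := by
        rw [← Real.rpow_add_one (hε _).ne']; congr 1; ring
      have := (hε (l + 1)).ne'
      have := (hw (l + 1)).ne'
      rw [e2]
      simp only [hsd, hτd]
      field_simp
    have h3 : 0 ≤ ε (l + 1) ^ p := Real.rpow_nonneg (hε _).le _
    rw [h2]
    nlinarith [mul_le_mul_of_nonneg_left (hτ2 l) h3]
  have hsum : ∀ L (lam : ℝ), 2 ≤ lam → (L ≤ 3 ∨ τ L ≤ lam) →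
      ∑ l ∈ Finset.range L, s (l + 1) ≤ ∑ l ∈ Finset.range 3, s (l + 1) + 2 * ∫ t in (1:ℝ)..lam, φ t := by
    intro L lam hlam hL
    have hI : 0 ≤ ∫ t in (1:ℝ)..lam, φ t :=
      intervalIntegral.integral_nonneg (by linarith) fun t ht => hφ0 t (by linarith [ht.1])
    by_cases hL3 : L ≤ 3
    · have := Finset.sum_le_sum_of_subset_of_nonneg (f := fun l => s (l + 1))
        (Finset.range_mono hL3) (fun i _ _ => hs0 _)
      linarith
    · have hL' := hL.resolve_left hL3
      obtain ⟨n, rfl⟩ := Nat.exists_eq_add_of_le (show 3 ≤ L by omega)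
      rw [Finset.sum_range_add]
      have h1 : ∑ x ∈ Finset.range n, s (3 + x + 1) ≤ 2 * ∫ t in (τ 3)..(τ (3 + n)), φ t := by
        have := intervalIntegral.sum_integral_adjacent_intervals (f := φ)
          (a := fun i : ℕ => τ (3 + i)) (n := n) (μ := volume)
          (fun k _ => hInt _ _ (hτ0 _) (hτ0 _))
        simp only [add_zero] at this
        rw [← this, Finset.mul_sum]
        exact Finset.sum_le_sum fun x _ => hstep (3 + x)
      have h2 : ∫ t in (τ 3)..(τ (3 + n)), φ t ≤ ∫ t in (1:ℝ)..lam, φ t := by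
        refine intervalIntegral.integral_mono_interval hτ3 (hτmono (by omega)) hL' ?_
          (hInt _ _ (by norm_num) (by linarith))
        refine (ae_restrict_iff' measurableSet_Ioc).mpr (Filter.Eventually.of_forall fun t ht => ?_)
        exact hφ0 t (by linarith [ht.1])
      linarith
  have hc0 : 0 < ∫ t in (1:ℝ)..2, φ t := by
    refine intervalIntegral.intervalIntegral_pos_of_pos_on (hInt _ _ (by norm_num) (by norm_num)) ?_ (by norm_num)
    intro t ht
    have ht0 : 0 < t := by linarith [ht.1]
    have h1 := hχinv_right (1 / t) (by positivity)
    refine Real.rpow_pos_of_pos (lt_of_le_of_ne h1.1 fun h => ?_) _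
    rw [← h, zero_mul] at h1
    have : 0 < 1 / t := by positivity
    linarith [h1.2]
  set c0 := ∫ t in (1:ℝ)..2, φ t with hc0d
  set X := 70 * π / (w 0 * ε 0) + (7 * D + 20) * s 0 with hX
  set Y := 2 * (7 * D) + 70 * π + (7 * D + 20) with hY
  set Z := ∑ l ∈ Finset.range 3, s (l + 1) with hZ
  have hX0 : 0 < X := by
    have := hε 0
    have := hw 0
    have := hs0 0
    positivity
  have hY0 : 0 < Y := by positivity
  have hZ0 : 0 ≤ Z := Finset.sum_nonneg fun i _ => hs0 _
  refine ⟨(X + Y * Z) / c0 + 2 * Y, by positivity, ?_⟩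
  intro lam hlam g hg
  have hIc : c0 ≤ ∫ t in (1:ℝ)..lam, φ t := by
    refine intervalIntegral.integral_mono_interval le_rfl (by norm_num) hlam ?_
          (hInt _ _ (by norm_num) (by linarith))
    refine (ae_restrict_iff' measurableSet_Ioc).mpr (Filter.Eventually.of_forall fun t ht => ?_)
    exact hφ0 t (by linarith [ht.1])
  set I := ∫ t in (1:ℝ)..lam, φ t with hI
  by_cases hfi : IntervalIntegrable (fun t => Complex.exp (Complex.I * (g t : ℂ))) volume 0 (2 * π)
  swap
  · have : ∀ k, ‖fourierCoef (fun t => Complex.exp (Complex.I * (g t : ℂ))) k‖ ^ p = 0 := by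
      intro k
      rw [coef_nonint _ hfi, norm_zero, Real.zero_rpow (by linarith)]
    simp only [this, Finset.sum_const_zero]
    have : 0 < I := hc0.trans_le hIc
    positivity
  have hnear : ∀ l, ∃ near : Finset ℤ, (near.card : ℝ) ≤ (70 * π) / (w l * ε l) ∧
      ∀ K : Finset ℤ, Disjoint K near →
        ∑ k ∈ K, ‖fourierCoef (fun t => Complex.exp (Complex.I * (g t : ℂ))) k‖ ^ 2 ≤
          (7 * D) * ε l / w l := by
    intro l
    obtain ⟨j, hj1, hj2⟩ := hj l
    obtain ⟨ctr, hctr⟩ := hE_cover j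
    obtain ⟨near, hn1, hn2⟩ := scale D hD hD0 E g hg hfi (2 ^ l) (ε l) (hε l)
      (by simp only [hεd]; push_cast; field_simp) (2 ^ j) (ρ j) hj1 ctr hctr
    have hwl := hw l
    have hel := hε l
    have b1 : (3 * ((2 ^ j : ℕ) : ℝ) + 1) ≤ 7 / w l := by
      push_cast
      have : 1 ≤ 1 / w l := by rw [le_div_iff₀ hwl]; linarith [hw1 l]
      have e : 7 / w l = 3 * (2 / w l) + 1 / w l := by ring
      rw [e]
      linarith
    have b2 : 8 * π / ε l + 1 ≤ 10 * π / ε l := by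
      have : 1 ≤ 2 * π / ε l := by rw [le_div_iff₀ hel]; linarith [hεle l]
      have e : 10 * π / ε l = 8 * π / ε l + 2 * π / ε l := by ring
      rw [e]
      linarith
    refine ⟨near, hn1.trans ?_, fun K hK => (hn2 K hK).trans ?_⟩
    · calc _ ≤ (7 / w l) * (10 * π / ε l) := by gcongr
        _ = _ := by field_simp; norm_num
    · calc _ ≤ D * (7 / w l * ε l) := by gcongr
        _ = _ := by field_simp
  choose near hn1 hn2 using hnear
  -- choice of L
  have hex : ∃ l : ℕ, lam < τ (l + 1) := by
    obtain ⟨n, hn⟩ := pow_unbounded_of_one_lt (lam / τ 0) (one_lt_two : (1:ℝ) < 2)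
    refine ⟨n, ?_⟩
    rw [div_lt_iff₀ (hτ0 0)] at hn
    exact hn.trans_le ((hτpow n).trans (hτmono (Nat.le_succ n)))
  obtain ⟨L, hL1, hL2⟩ : ∃ L : ℕ, lam < τ (L + 1) ∧ (L ≤ 3 ∨ τ L ≤ lam) := by
    classical
    have hs := Nat.find_spec hex
    have hm := fun m => Nat.find_min hex (m := m)
    refine ⟨Nat.find hex, hs, ?_⟩
    set j := Nat.find hex
    by_cases h : j ≤ 3
    · exact Or.inl h
    · right
      have := hm (j - 1) (by omega)
      rw [Nat.sub_add_cancel (by omega)] at this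
      exact not_lt.mp this
  have hK : ((Finset.Icc (-⌊2 * lam⌋) ⌊2 * lam⌋).card : ℝ) ≤ 20 / (w L * ε L) := by
    have h1 : ((Finset.Icc (-⌊2 * lam⌋) ⌊2 * lam⌋).card : ℝ) ≤ 5 * lam := by
      rw [Int.card_Icc]
      have e1 := Int.floor_le (2 * lam)
      have e4 : (((⌊2 * lam⌋ + 1 - -⌊2 * lam⌋).toNat : ℤ) : ℝ) ≤ 5 * lam := by
        rw [Int.toNat_eq_max]
        push_cast
        refine max_le (by linarith) (by linarith)
      exact_mod_cast e4
    have h2 := hτ4 L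
    have e : 20 / (w L * ε L) = 5 * (4 / (w L * ε L)) := by ring
    rw [e]
    linarith
  have main := final_sum p hp1 hp2
    (fun k => ‖fourierCoef (fun t => Complex.exp (Complex.I * (g t : ℂ))) k‖)
    (fun k => norm_nonneg _) (fun k => coef_le_one _ (fun t => (norm_expI _).le) k)
    ε w hε hw hε2 hwm (70 * π) (7 * D) 20 (by positivity) near hn1 hn2
    (Finset.Icc (-⌊2 * lam⌋) ⌊2 * lam⌋) L hK
  have hsL : s L ≤ s 0 + ∑ l ∈ Finset.range L, s (l + 1) := by
    have h1 : ∑ l ∈ Finset.range (L + 1), s l = ∑ l ∈ Finset.range L, s (l + 1) + s 0 :=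
      Finset.sum_range_succ' _ _
    have h2 : s L ≤ ∑ l ∈ Finset.range (L + 1), s l :=
      Finset.single_le_sum (f := s) (fun i _ => hs0 i) (by simp)
    linarith
  have hsm := hsum L lam hlam hL2
  rw [← Finset.mul_sum] at main
  refine main.trans ?_
  change 70 * π / (w 0 * ε 0) + (2 * (7 * D) + 70 * π) * (∑ l ∈ Finset.range L, s (l + 1)) +
    (7 * D + 20) * s L ≤ ((X + Y * Z) / c0 + 2 * Y) * I
  set Sg := ∑ l ∈ Finset.range L, s (l + 1) with hSg
  have f1 : (7 * D + 20) * s L ≤ (7 * D + 20) * (s 0 + Sg) :=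
    mul_le_mul_of_nonneg_left hsL (by positivity)
  have f2 : Y * Sg ≤ Y * (Z + 2 * I) := mul_le_mul_of_nonneg_left hsm hY0.le
  have f3 : X + Y * Z ≤ (X + Y * Z) / c0 * I := by
    rw [div_mul_eq_mul_div, le_div_iff₀ hc0]
    exact mul_le_mul_of_nonneg_left hIc (by positivity)
  calc _ ≤ X + Y * Sg := by rw [hX, hY]; linarith
    _ ≤ X + Y * (Z + 2 * I) := by linarith
    _ ≤ _ := by linarith
end
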